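/- Let f : ℝⁿ → [0,∞) be upper semicontinuous and log-concave with 0 < ∫_{ℝⁿ} f dx < ∞, and let L, B ⊂ ℝⁿ be compact convex sets. Then δ(f, 1_{L+B}) = δ(f, 1_L) + δ(f, 1_B), where L + B is the Minkowski sum and 1_K denotes the indicator function of K. -/

import Mathlib

open MeasureTheory Set Filter Topology Pointwise
open scoped ENNReal RealInnerProductSpace NNReal

noncomputable section

/-- Euclidean space ℝⁿ. -/
abbrev Euc (n : ℕ) := EuclideanSpace ℝ (Fin n)

/-- A nonnegative function is log-concave if `f((1-λ)x+λy) ≥ f(x)^{1-λ} f(y)^λ`. -/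
def LogConcaveFn {n : ℕ} (f : Euc n → ℝ) : Prop :=
  ∀ x y : Euc n, ∀ l : ℝ, 0 ≤ l → l ≤ 1 →
    f x ^ (1 - l) * f y ^ l ≤ f ((1 - l) • x + l • y)

/-- Sup-convolution `(f⋆g)(x) = sup_y f(y) g(x-y)`, valued in `[0,∞]`. -/
def supConv {n : ℕ} (f g : Euc n → ℝ) (x : Euc n) : ℝ≥0∞ :=
  ⨆ y : Euc n, ENNReal.ofReal (f y * g (x - y))

/-- Dilation `(t·g)(x) = g(x/t)^t`. -/
def dil {n : ℕ} (t : ℝ) (g : Euc n → ℝ) (x : Euc n) : ℝ :=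
  g (t⁻¹ • x) ^ t

/-- Total mass `∫ f` of a nonnegative function, in `[0,∞]`. -/
def totalMass {n : ℕ} (f : Euc n → ℝ) : ℝ≥0∞ := ∫⁻ x, ENNReal.ofReal (f x)

/-- The difference quotient `(∫ f⋆(t·g) − ∫ f)/t`, valued in `EReal`. -/
def deltaQuot {n : ℕ} (f g : Euc n → ℝ) (t : ℝ) : EReal :=
  ((t⁻¹ : ℝ) : EReal) *
    (((∫⁻ x, supConv f (dil t g) x : ℝ≥0∞) : EReal) - ((totalMass f : ℝ≥0∞) : EReal))

/-- The support `K_f`: closure of `{x : f(x) > 0}`. -/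
def spt {n : ℕ} (f : Euc n → ℝ) : Set (Euc n) := closure {x | 0 < f x}

/-- `φ = -log f`. -/
def mlog {n : ℕ} (f : Euc n → ℝ) (x : Euc n) : ℝ := -Real.log (f x)

/-- The measure `μ_f`: pushforward of `f dx` under the (a.e. defined) gradient of `φ = -log f`. -/
def muF {n : ℕ} (f : Euc n → ℝ) : Measure (Euc n) :=
  Measure.map (gradient (mlog f)) (volume.withDensity fun x => ENNReal.ofReal (f x))

-- The outer unit normal (Gauss) map of a convex set `K`, defined (H^{n-1}-a.e. uniquely)
-- at boundary points; junk value `0` where no outer normal exists.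
open Classical in
def gaussMap {n : ℕ} (K : Set (Euc n)) (x : Euc n) : Euc n :=
  if h : ∃ u : Euc n, ‖u‖ = 1 ∧ ∀ y ∈ K, ⟪y - x, u⟫ ≤ 0 then h.choose else 0

/-- The weighted boundary measure `f · H^{n-1}|_{∂K_f}`. -/
def bdryMeasure {n : ℕ} (f : Euc n → ℝ) : Measure (Euc n) :=
  ((μH[(n : ℝ) - 1] : Measure (Euc n)).restrict (frontier (spt f))).withDensity
    (fun x => ENNReal.ofReal (f x))

/-- The measure `ν_f` on the sphere: pushforward of `f · H^{n-1}|_{∂K_f}` under the Gauss map. -/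
def nuF {n : ℕ} (f : Euc n → ℝ) : Measure (Euc n) :=
  Measure.map (gaussMap (spt f)) (bdryMeasure f)

/-- Positive part of an extended real, in `[0,∞]`. -/
def epos (a : EReal) : ℝ≥0∞ := if a = ⊤ then ⊤ else ENNReal.ofReal a.toReal

/-- Integral of an `EReal`-valued function: positive part minus negative part. -/
def eInt {n : ℕ} (μ : Measure (Euc n)) (h : Euc n → EReal) : EReal :=
  ((∫⁻ x, epos (h x) ∂μ : ℝ≥0∞) : EReal) - ((∫⁻ x, epos (-(h x)) ∂μ : ℝ≥0∞) : EReal)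

/-- The support function `h_g = (-log g)^*` of a log-concave function, valued in `EReal`. -/
def hSupp {n : ℕ} (g : Euc n → ℝ) (x : Euc n) : EReal :=
  ⨆ y : Euc n, (((⟪x, y⟫ : ℝ) : EReal) +
    (if g y = 0 then (⊥ : EReal) else ((Real.log (g y) : ℝ) : EReal)))

/-- The support function of a set, valued in `EReal`. -/
def hSetE {n : ℕ} (K : Set (Euc n)) (x : Euc n) : EReal :=
  ⨆ y ∈ K, ((⟪y, x⟫ : ℝ) : EReal)

/-- The support function of a set, real-valued: `h_K(x) = sup_{y ∈ K} ⟨y, x⟩`. -/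
def hSetR {n : ℕ} (K : Set (Euc n)) (x : Euc n) : ℝ :=
  sSup ((fun y => ⟪y, x⟫) '' K)

/-- Divergence of a vector field: the trace of its derivative. -/
def dvg {n : ℕ} (Φ : Euc n → Euc n) (x : Euc n) : ℝ :=
  LinearMap.trace ℝ (Euc n) (fderiv ℝ Φ x : Euc n →ₗ[ℝ] Euc n)

/-- The anisotropic total variation `TV_L(f)`. -/
def TVL {n : ℕ} (L : Set (Euc n)) (f : Euc n → ℝ) : EReal :=
  ⨆ Φ : {Φ : Euc n → Euc n //
      ContDiff ℝ 1 Φ ∧ HasCompactSupport Φ ∧ ∀ x, gauge L (Φ x) ≤ 1},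
    ((∫ x, f x * dvg Φ.1 x : ℝ) : EReal)

/-- The anisotropic perimeter `Per_L(A) = TV_L(1_A)`. -/
def PerL {n : ℕ} (L : Set (Euc n)) (A : Set (Euc n)) : EReal :=
  TVL L (A.indicator fun _ => (1 : ℝ))

/-- The surface area measure `S_F` of a convex body: pushforward of `H^{n-1}|_{∂F}`
under the Gauss map. -/
def surfMeasure {n : ℕ} (F : Set (Euc n)) : Measure (Euc n) :=
  Measure.map (gaussMap F) ((μH[(n : ℝ) - 1] : Measure (Euc n)).restrict (frontier F))

/-
For `t > 0`, `f ⋆ (t·1_L)` is the function `x ↦ sup_{z ∈ tL} f (x - z)`. If `log f` is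
Lipschitz, Rademacher's theorem and dominated convergence identify the first variation with
`∫ h_L (-∇f)`, where `h_L` is the support function of `L`; it is additive because
`h_{L+B} = h_L + h_B`.

A general `f` is replaced by its convolutions `f_ε` with the rescaled Laplace densities
`C⁻¹ exp (-‖x‖)`: `f_ε` has the mass of `f`, `log f_ε` is `ε⁻¹`-Lipschitz, and `f_ε` is
log-concave by the Prékopa–Leindler inequality. Write `D ε` for the first variation of `f_ε`.
Mollifying does not increase `∫ f ⋆ (t·1_L)`, so `D ε` is at most the lower first variation of
`f`. Conversely `t ↦ log ∫ f_ε ⋆ (t·1_L)` is concave, again by Prékopa–Leindler, whence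
`∫ f_ε ⋆ (t·1_L) ≤ M exp (t D ε / M)` with `M = ∫ f`; letting first `ε → 0` and then `t → 0`
bounds the upper first variation of `f` by `liminf D ε`. Hence both limits exist and agree, and
additivity passes from `D ε` to the limit.
-/

lemma volume_add_volume_le_of_isCompact {A B : Set ℝ} (hA : IsCompact A) (hB : IsCompact B)
    (hA₀ : A.Nonempty) (hB₀ : B.Nonempty) : volume A + volume B ≤ volume (A + B) := by
  obtain ⟨a, haA, ha⟩ := hA.exists_isGreatest hA₀
  obtain ⟨b, hbB, hb⟩ := hB.exists_isLeast hB₀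
  have hinter : (b +ᵥ A) ∩ (a +ᵥ B) ⊆ {a + b} := by
    rintro _ ⟨⟨x, hx, rfl⟩, ⟨y, hy, hxy⟩⟩
    have hxa := ha hx
    have hby := hb hy
    simp only [vadd_eq_add, mem_singleton_iff] at hxy ⊢
    linarith
  have hdisj : AEDisjoint volume (b +ᵥ A) (a +ᵥ B) :=
    measure_mono_null hinter Real.volume_singleton
  have hsub : (b +ᵥ A) ∪ (a +ᵥ B) ⊆ A + B := by
    rintro _ (⟨x, hx, rfl⟩ | ⟨y, hy, rfl⟩)
    · exact ⟨x, hx, b, hbB, add_comm x b⟩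
    · exact ⟨a, haA, y, hy, rfl⟩
  calc volume A + volume B = volume (b +ᵥ A) + volume (a +ᵥ B) := by
        rw [measure_vadd, measure_vadd]
    _ = volume ((b +ᵥ A) ∪ (a +ᵥ B)) :=
        (measure_union₀ (hB.vadd a).measurableSet.nullMeasurableSet hdisj).symm
    _ ≤ volume (A + B) := measure_mono hsub

lemma volume_add_volume_le {A B : Set ℝ} (hA : MeasurableSet A) (hB : MeasurableSet B)
    (hA₀ : A.Nonempty) (hB₀ : B.Nonempty) : volume A + volume B ≤ volume (A + B) := by
  obtain ⟨a, ha⟩ := hA₀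
  obtain ⟨b, hb⟩ := hB₀
  rw [hA.measure_eq_iSup_isCompact, hB.measure_eq_iSup_isCompact]
  simp only [iSup_and']
  refine ENNReal.biSup_add_biSup_le' (p := fun K => K ⊆ A ∧ IsCompact K)
    (q := fun K => K ⊆ B ∧ IsCompact K) ⟨∅, empty_subset _, isCompact_empty⟩
    ⟨∅, empty_subset _, isCompact_empty⟩ fun K ⟨hKA, hK⟩ K' ⟨hKB, hK'⟩ => ?_
  calc volume K + volume K' ≤ volume (insert a K) + volume (insert b K') := by
        gcongr <;> exact subset_insert _ _
    _ ≤ volume (insert a K + insert b K') :=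
        volume_add_volume_le_of_isCompact (hK.insert a) (hK'.insert b) (insert_nonempty _ _)
          (insert_nonempty _ _)
    _ ≤ volume (A + B) :=
        measure_mono (add_subset_add (insert_subset ha hKA) (insert_subset hb hKB))

lemma ofReal_mul_volume_add_le {A B : Set ℝ} (hA : MeasurableSet A) (hB : MeasurableSet B)
    (hA₀ : A.Nonempty) (hB₀ : B.Nonempty) {a b : ℝ} (ha : 0 < a) (hb : 0 < b) :
    ENNReal.ofReal a * volume A + ENNReal.ofReal b * volume B ≤ volume (a • A + b • B) := by
  have hsmul {c : ℝ} (hc : 0 < c) (S : Set ℝ) : volume (c • S) = ENNReal.ofReal c * volume S := by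
    rw [Measure.addHaar_smul, Module.finrank_self, pow_one, abs_of_pos hc]
  rw [← hsmul ha, ← hsmul hb]
  exact volume_add_volume_le (hA.const_smul₀ a) (hB.const_smul₀ b) hA₀.smul_set hB₀.smul_set

lemma lintegral_eq_setLIntegral_Ioo_measure_lt {α : Type*} [MeasurableSpace α] {μ : Measure α}
    {f : α → ℝ≥0∞} (hf : Measurable f) (hf1 : ∀ x, f x ≤ 1) :
    ∫⁻ x, f x ∂μ = ∫⁻ t in Ioo (0 : ℝ) 1, μ {x | ENNReal.ofReal t < f x} := by
  have hfin (x : α) : f x ≠ ⊤ := ne_top_of_le_ne_top ENNReal.one_ne_top (hf1 x)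
  have hset {t : ℝ} (ht : 0 < t) : {x | t < (f x).toReal} = {x | ENNReal.ofReal t < f x} :=
    Set.ext fun x => (ENNReal.ofReal_lt_iff_lt_toReal ht.le (hfin x)).symm
  have hempty {t : ℝ} (ht : 1 ≤ t) : {x | ENNReal.ofReal t < f x} = ∅ :=
    eq_empty_of_forall_notMem fun x =>
      not_lt.2 ((hf1 x).trans (ENNReal.one_le_ofReal.2 ht))
  calc ∫⁻ x, f x ∂μ = ∫⁻ x, ENNReal.ofReal (f x).toReal ∂μ := by
        simp only [ENNReal.ofReal_toReal (hfin _)]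
    _ = ∫⁻ t in Ioi (0 : ℝ), μ {x | t < (f x).toReal} :=
        lintegral_eq_lintegral_meas_lt μ (.of_forall fun _ => ENNReal.toReal_nonneg)
          hf.ennreal_toReal.aemeasurable
    _ = ∫⁻ t in Ioi (0 : ℝ), μ {x | ENNReal.ofReal t < f x} :=
        setLIntegral_congr_fun measurableSet_Ioi fun t ht => by rw [hset ht]
    _ = ∫⁻ t in Ioo (0 : ℝ) 1, μ {x | ENNReal.ofReal t < f x} := by
        rw [← lintegral_indicator measurableSet_Ioi, ← lintegral_indicator measurableSet_Ioo]
        congr with t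
        by_cases ht : 1 ≤ t
        · simp [indicator, hempty ht]
        · simp [indicator, not_le.1 ht]

lemma geom_mean_le_arith_mean2_weighted_ennreal {a b : ℝ} (ha : 0 < a) (hb : 0 < b)
    (hab : a + b = 1) (x y : ℝ≥0∞) :
    x ^ a * y ^ b ≤ ENNReal.ofReal a * x + ENNReal.ofReal b * y := by
  obtain rfl | hx := eq_or_ne x ⊤
  · simp [ENNReal.mul_top, ha]
  obtain rfl | hy := eq_or_ne y ⊤
  · simp [ENNReal.mul_top, hb]
  lift x to ℝ≥0 using hx
  lift y to ℝ≥0 using hy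
  have hamgm := NNReal.geom_mean_le_arith_mean2_weighted a.toNNReal b.toNNReal x y
    (by rw [← Real.toNNReal_add ha.le hb.le, hab, Real.toNNReal_one])
  rw [Real.coe_toNNReal a ha.le, Real.coe_toNNReal b hb.le] at hamgm
  rw [← ENNReal.coe_rpow_of_nonneg x ha.le, ← ENNReal.coe_rpow_of_nonneg y hb.le,
    ENNReal.ofReal, ENNReal.ofReal]
  exact_mod_cast hamgm

section Real

variable {a b : ℝ} {f g h : ℝ → ℝ≥0∞}

lemma lintegral_rpow_mul_le_of_iSup_eq_one (ha : 0 < a) (hb : 0 < b) (hab : a + b = 1)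
    (hf : Measurable f) (hg : Measurable g) (hh : Measurable h)
    (hf1 : ⨆ x, f x = 1) (hg1 : ⨆ x, g x = 1)
    (hfgh : ∀ x y, f x ^ a * g y ^ b ≤ h (a • x + b • y)) :
    (∫⁻ x, f x) ^ a * (∫⁻ x, g x) ^ b ≤ ∫⁻ x, h x := by
  have hlevel {t : ℝ} (ht : t ∈ Ioo (0 : ℝ) 1) :
      ENNReal.ofReal a * volume {x | ENNReal.ofReal t < f x} +
          ENNReal.ofReal b * volume {x | ENNReal.ofReal t < g x} ≤
        volume {x | ENNReal.ofReal t < min (h x) 1} := by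
    have ht1 : ENNReal.ofReal t < 1 := ENNReal.ofReal_lt_one.2 ht.2
    have hne {u : ℝ → ℝ≥0∞} (hu : ⨆ x, u x = 1) : {x | ENNReal.ofReal t < u x}.Nonempty :=
      lt_iSup_iff.1 (ht1.trans_eq hu.symm)
    refine (ofReal_mul_volume_add_le (measurableSet_lt measurable_const hf)
      (measurableSet_lt measurable_const hg) (hne hf1) (hne hg1) ha hb).trans (measure_mono ?_)
    rintro _ ⟨_, ⟨x, hx, rfl⟩, _, ⟨y, hy, rfl⟩, rfl⟩
    refine lt_min (lt_of_lt_of_le ?_ (hfgh x y)) ht1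
    calc ENNReal.ofReal t = ENNReal.ofReal t ^ a * ENNReal.ofReal t ^ b := by
          rw [← ENNReal.rpow_add_of_nonneg a b ha.le hb.le, hab, ENNReal.rpow_one]
      _ < f x ^ a * g y ^ b :=
          ENNReal.mul_lt_mul (ENNReal.rpow_lt_rpow hx ha) (ENNReal.rpow_lt_rpow hy hb)
  have hmeas (u : ℝ → ℝ≥0∞) : Measurable fun t : ℝ => volume {x | ENNReal.ofReal t < u x} :=
    Antitone.measurable fun s t hst => measure_mono fun x hx =>
      (ENNReal.ofReal_le_ofReal hst).trans_lt hx
  calc (∫⁻ x, f x) ^ a * (∫⁻ x, g x) ^ b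
      ≤ ENNReal.ofReal a * (∫⁻ x, f x) + ENNReal.ofReal b * ∫⁻ x, g x :=
        geom_mean_le_arith_mean2_weighted_ennreal ha hb hab _ _
    _ ≤ ∫⁻ x, min (h x) 1 := by
        rw [lintegral_eq_setLIntegral_Ioo_measure_lt hf fun x => hf1 ▸ le_iSup f x,
          lintegral_eq_setLIntegral_Ioo_measure_lt hg fun x => hg1 ▸ le_iSup g x,
          lintegral_eq_setLIntegral_Ioo_measure_lt (hh.min measurable_const)
            fun x => min_le_right _ _,
          ← lintegral_const_mul _ (hmeas f), ← lintegral_const_mul _ (hmeas g),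
          ← lintegral_add_left ((hmeas f).const_mul _)]
        exact setLIntegral_mono' measurableSet_Ioo fun t ht => hlevel ht
    _ ≤ ∫⁻ x, h x := lintegral_mono fun x => min_le_left _ _

lemma lintegral_rpow_mul_le_of_iSup_ne_top (ha : 0 < a) (hb : 0 < b) (hab : a + b = 1)
    (hf : Measurable f) (hg : Measurable g) (hh : Measurable h)
    (hf_top : ⨆ x, f x ≠ ⊤) (hg_top : ⨆ x, g x ≠ ⊤)
    (hfgh : ∀ x y, f x ^ a * g y ^ b ≤ h (a • x + b • y)) :
    (∫⁻ x, f x) ^ a * (∫⁻ x, g x) ^ b ≤ ∫⁻ x, h x := by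
  obtain hf0 | hf0 := eq_or_ne (⨆ x, f x) 0
  · simp [ENNReal.iSup_eq_zero.1 hf0, ha]
  obtain hg0 | hg0 := eq_or_ne (⨆ x, g x) 0
  · simp [ENNReal.iSup_eq_zero.1 hg0, hb]
  set M := ⨆ x, f x
  set N := ⨆ x, g x
  set c : ℝ≥0∞ := (M⁻¹) ^ a * (N⁻¹) ^ b with hc
  have hscale (u v : ℝ≥0∞) : (M⁻¹ * u) ^ a * (N⁻¹ * v) ^ b = c * (u ^ a * v ^ b) := by
    rw [ENNReal.mul_rpow_of_nonneg _ _ ha.le, ENNReal.mul_rpow_of_nonneg _ _ hb.le, hc,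
      mul_mul_mul_comm]
  have hc0 : c ≠ 0 := by
    simp [hc, ENNReal.rpow_eq_zero_iff, ha.not_gt, hb.not_gt, hf_top, hg_top, hf0, hg0]
  have hc_top : c ≠ ⊤ := ENNReal.mul_ne_top
    (ENNReal.rpow_ne_top_of_nonneg ha.le (ENNReal.inv_ne_top.2 hf0))
    (ENNReal.rpow_ne_top_of_nonneg hb.le (ENNReal.inv_ne_top.2 hg0))
  have hnorm := lintegral_rpow_mul_le_of_iSup_eq_one (f := fun x => M⁻¹ * f x)
    (g := fun x => N⁻¹ * g x) (h := fun x => c * h x) ha hb hab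
    (hf.const_mul _) (hg.const_mul _) (hh.const_mul _)
    (by rw [← ENNReal.mul_iSup, ENNReal.inv_mul_cancel hf0 hf_top])
    (by rw [← ENNReal.mul_iSup, ENNReal.inv_mul_cancel hg0 hg_top])
    fun x y => by rw [hscale]; exact mul_le_mul_right (hfgh x y) c
  rw [lintegral_const_mul _ hf, lintegral_const_mul _ hg, lintegral_const_mul _ hh,
    hscale] at hnorm
  exact (ENNReal.mul_le_mul_iff_right hc0 hc_top).1 hnorm

end Real

lemma tendsto_lintegral_min_natCast {α : Type*} [MeasurableSpace α] (μ : Measure α)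
    {f : α → ℝ≥0∞} (hf : Measurable f) :
    Tendsto (fun N : ℕ => ∫⁻ x, min (f x) N ∂μ) atTop (𝓝 (∫⁻ x, f x ∂μ)) := by
  refine lintegral_tendsto_of_tendsto_of_monotone
    (fun N => (hf.min measurable_const).aemeasurable)
    (.of_forall fun x M N hMN => min_le_min_left _ (Nat.cast_le.2 hMN))
    (.of_forall fun x => ?_)
  simpa using tendsto_const_nhds.min ENNReal.tendsto_nat_nhds_top

/-- The Prékopa–Leindler inequality for the measure `μ`, for all weights `a + b = 1`. It is
stated as a property of `μ` because it is stable under products and linear images, which is how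
it passes from `ℝ` to Haar measures on finite-dimensional spaces. -/
def SatisfiesPrekopaLeindler {E : Type*} [AddCommGroup E] [Module ℝ E] [MeasurableSpace E]
    (μ : Measure E) : Prop :=
  ∀ ⦃a b : ℝ⦄, 0 < a → 0 < b → a + b = 1 → ∀ ⦃f g h : E → ℝ≥0∞⦄,
    Measurable f → Measurable g → Measurable h →
    (∀ x y, f x ^ a * g y ^ b ≤ h (a • x + b • y)) →
    (∫⁻ x, f x ∂μ) ^ a * (∫⁻ x, g x ∂μ) ^ b ≤ ∫⁻ x, h x ∂μ

lemma satisfiesPrekopaLeindler_real : SatisfiesPrekopaLeindler (volume : Measure ℝ) := by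
  intro a b ha hb hab f g h hf hg hh hfgh
  have hbdd (u : ℝ → ℝ≥0∞) (N : ℕ) : ⨆ x, min (u x) N ≠ ⊤ :=
    ne_top_of_le_ne_top (ENNReal.natCast_ne_top N) (iSup_le fun x => min_le_right _ _)
  have htrunc (N : ℕ) : (∫⁻ x, min (f x) N) ^ a * (∫⁻ x, min (g x) N) ^ b ≤ ∫⁻ x, h x :=
    lintegral_rpow_mul_le_of_iSup_ne_top ha hb hab (hf.min measurable_const)
      (hg.min measurable_const) hh (hbdd f N) (hbdd g N) fun x y =>
        (mul_le_mul' (ENNReal.rpow_le_rpow (min_le_left _ _) ha.le)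
          (ENNReal.rpow_le_rpow (min_le_left _ _) hb.le)).trans (hfgh x y)
  obtain hf0 | hf0 := eq_or_ne (∫⁻ x, f x) 0
  · simp [hf0, ha]
  obtain hg0 | hg0 := eq_or_ne (∫⁻ x, g x) 0
  · simp [hg0, hb]
  have hrpow {u : ℝ → ℝ≥0∞} (hu : Measurable u) {p : ℝ} :
      Tendsto (fun N : ℕ => (∫⁻ x, min (u x) N) ^ p) atTop (𝓝 ((∫⁻ x, u x) ^ p)) :=
    (ENNReal.continuous_rpow_const.tendsto _).comp (tendsto_lintegral_min_natCast volume hu)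
  exact le_of_tendsto' (ENNReal.Tendsto.mul (hrpow hf) (.inl (by simp [hf0, ha.not_gt]))
    (hrpow hg) (.inl (by simp [hg0, hb.not_gt]))) htrunc

namespace SatisfiesPrekopaLeindler

variable {E F : Type*} [AddCommGroup E] [Module ℝ E] [MeasurableSpace E]
  [AddCommGroup F] [Module ℝ F] [MeasurableSpace F] {μ : Measure E} {ν : Measure F}

lemma prod [SFinite ν] (hμ : SatisfiesPrekopaLeindler μ) (hν : SatisfiesPrekopaLeindler ν) :
    SatisfiesPrekopaLeindler (μ.prod ν) := by
  intro a b ha hb hab f g h hf hg hh hfgh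
  rw [lintegral_prod _ hf.aemeasurable, lintegral_prod _ hg.aemeasurable,
    lintegral_prod _ hh.aemeasurable]
  refine hμ ha hb hab hf.lintegral_prod_right' hg.lintegral_prod_right' hh.lintegral_prod_right'
    fun x x' => ?_
  exact hν ha hb hab (hf.comp measurable_prodMk_left) (hg.comp measurable_prodMk_left)
    (hh.comp measurable_prodMk_left) fun y y' => hfgh (x, y) (x', y')

lemma of_measurePreserving (hμ : SatisfiesPrekopaLeindler μ) (T : E →ₗ[ℝ] F)
    (hT : MeasurePreserving T μ ν) : SatisfiesPrekopaLeindler ν := by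
  intro a b ha hb hab f g h hf hg hh hfgh
  rw [← hT.lintegral_comp hf, ← hT.lintegral_comp hg, ← hT.lintegral_comp hh]
  refine hμ ha hb hab (hf.comp hT.measurable) (hg.comp hT.measurable) (hh.comp hT.measurable)
    fun x y => ?_
  simpa only [Function.comp_apply, map_add, map_smul] using hfgh (T x) (T y)

lemma smul (hμ : SatisfiesPrekopaLeindler μ) (c : ℝ≥0) : SatisfiesPrekopaLeindler (c • μ) := by
  intro a b ha hb hab f g h hf hg hh hfgh
  simp only [lintegral_smul_measure, ENNReal.smul_def, smul_eq_mul]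
  rw [ENNReal.mul_rpow_of_nonneg _ _ ha.le, ENNReal.mul_rpow_of_nonneg _ _ hb.le,
    mul_mul_mul_comm, ← ENNReal.rpow_add_of_nonneg a b ha.le hb.le, hab, ENNReal.rpow_one]
  exact mul_le_mul_right (hμ ha hb hab hf hg hh hfgh) _

end SatisfiesPrekopaLeindler

lemma satisfiesPrekopaLeindler_dirac {E : Type*} [AddCommGroup E] [Module ℝ E]
    [MeasurableSpace E] : SatisfiesPrekopaLeindler (Measure.dirac (0 : E)) := by
  intro a b _ _ _ f g h hf hg hh hfgh
  rw [lintegral_dirac' _ hf, lintegral_dirac' _ hg, lintegral_dirac' _ hh]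
  simpa using hfgh 0 0

lemma satisfiesPrekopaLeindler_pi (n : ℕ) :
    SatisfiesPrekopaLeindler (volume : Measure (Fin n → ℝ)) := by
  induction n with
  | zero =>
    rw [volume_pi, Measure.pi_of_empty (x := 0)]
    exact satisfiesPrekopaLeindler_dirac
  | succ n ih =>
    have hcons : ⇑(MeasurableEquiv.piFinSuccAbove (fun _ : Fin (n + 1) => ℝ) 0).symm =
        Fin.consLinearEquiv ℝ fun _ : Fin (n + 1) => ℝ :=
      funext fun p => Fin.insertNth_zero' p.1 p.2
    exact (satisfiesPrekopaLeindler_real.prod ih).of_measurePreserving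
      (Fin.consLinearEquiv ℝ fun _ : Fin (n + 1) => ℝ).toLinearMap
      (hcons ▸ (volume_preserving_piFinSuccAbove (fun _ : Fin (n + 1) => ℝ) 0).symm)

lemma satisfiesPrekopaLeindler_addHaar {E : Type*} [NormedAddCommGroup E] [NormedSpace ℝ E]
    [FiniteDimensional ℝ E] [MeasurableSpace E] [BorelSpace E] (μ : Measure E)
    [μ.IsAddHaarMeasure] : SatisfiesPrekopaLeindler μ := by
  let T : (Fin (Module.finrank ℝ E) → ℝ) ≃L[ℝ] E :=
    (ContinuousLinearEquiv.ofFinrankEq (by simp)).symm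
  have hT : MeasurePreserving T volume (Measure.map T volume) :=
    T.continuous.measurable.measurePreserving volume
  have : (Measure.map T volume).IsAddHaarMeasure := T.isAddHaarMeasure_map volume
  rw [Measure.isAddLeftInvariant_eq_smul μ (Measure.map T volume)]
  exact ((satisfiesPrekopaLeindler_pi _).of_measurePreserving
    T.toLinearEquiv.toLinearMap hT).smul _

/-- Log-concavity of a `[0, ∞]`-valued function, with strictly positive weights so that no
convention for `∞ ^ 0` enters. -/
def IsLogConcave {E : Type*} [AddCommGroup E] [Module ℝ E] (g : E → ℝ≥0∞) : Prop :=
  ∀ ⦃a b : ℝ⦄, 0 < a → 0 < b → a + b = 1 → ∀ x y, g x ^ a * g y ^ b ≤ g (a • x + b • y)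

namespace IsLogConcave

lemma convex_le {E : Type*} [AddCommGroup E] [Module ℝ E] {g : E → ℝ≥0∞} (hg : IsLogConcave g)
    (c : ℝ≥0∞) : Convex ℝ {x | c ≤ g x} := by
  refine convex_iff_forall_pos.2 fun x hx y hy a b ha hb hab => ?_
  calc c = c ^ a * c ^ b := by
        rw [← ENNReal.rpow_add_of_nonneg a b ha.le hb.le, hab, ENNReal.rpow_one]
    _ ≤ g x ^ a * g y ^ b :=
        mul_le_mul' (ENNReal.rpow_le_rpow hx ha.le) (ENNReal.rpow_le_rpow hy hb.le)
    _ ≤ g (a • x + b • y) := hg ha hb hab x y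

variable {E : Type*} [NormedAddCommGroup E] [NormedSpace ℝ E] [FiniteDimensional ℝ E]
  [MeasurableSpace E] [BorelSpace E] {μ : Measure E} [μ.IsAddHaarMeasure] {g : E → ℝ≥0∞}

lemma exists_ball_forall_le (hg : IsLogConcave g) (hg0 : ∫⁻ x, g x ∂μ ≠ 0) :
    ∃ x₀ : E, ∃ r > 0, ∃ c ≠ (0 : ℝ≥0∞), c ≠ ⊤ ∧ ∀ x ∈ Metric.ball x₀ r, c ≤ g x := by
  obtain ⟨n, hn⟩ : ∃ n : ℕ, μ {x | (n : ℝ≥0∞)⁻¹ ≤ g x} ≠ 0 := by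
    by_contra! hnull
    have hsupp : {x | g x ≠ 0} ⊆ ⋃ n : ℕ, {x | (n : ℝ≥0∞)⁻¹ ≤ g x} := fun x hx =>
      mem_iUnion.2 ((ENNReal.exists_inv_nat_lt hx).imp fun _ => le_of_lt)
    have hae : g =ᵐ[μ] 0 := measure_mono_null hsupp (measure_iUnion_null hnull)
    exact hg0 ((lintegral_congr_ae hae).trans lintegral_zero)
  obtain ⟨x₀, hx₀⟩ : (interior {x | (n : ℝ≥0∞)⁻¹ ≤ g x}).Nonempty := by
    by_contra! hempty
    have hfrontier : {x | (n : ℝ≥0∞)⁻¹ ≤ g x} ⊆ frontier {x | (n : ℝ≥0∞)⁻¹ ≤ g x} := by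
      rw [frontier, hempty, sdiff_empty]
      exact subset_closure
    exact hn (measure_mono_null hfrontier ((hg.convex_le _).addHaar_frontier μ))
  obtain ⟨r, hr, hball⟩ := Metric.mem_nhds_iff.1 (mem_interior_iff_mem_nhds.1 hx₀)
  refine ⟨x₀, r, hr, min (n : ℝ≥0∞)⁻¹ 1, ?_, ?_, fun x hx => (min_le_left _ _).trans (hball hx)⟩
  · exact (lt_min (by simp) one_pos).ne'
  · exact ne_top_of_le_ne_top ENNReal.one_ne_top (min_le_right _ _)

end IsLogConcave

/-- The largest value of `g` over the translates `x - z`, `z ∈ A`: the sup-convolution of `g` with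
the indicator function of `A`. -/
def supTranslate {E : Type*} [AddCommGroup E] (A : Set E) (g : E → ℝ≥0∞) (x : E) : ℝ≥0∞ :=
  ⨆ z ∈ A, g (x - z)

section SupTranslate

variable {E : Type*} [AddCommGroup E] {A B : Set E} {g : E → ℝ≥0∞}

lemma le_supTranslate {z : E} (hz : z ∈ A) (x : E) : g (x - z) ≤ supTranslate A g x :=
  le_iSup₂ (f := fun z (_ : z ∈ A) => g (x - z)) z hz

lemma supTranslate_mono (hAB : A ⊆ B) (x : E) : supTranslate A g x ≤ supTranslate B g x :=
  biSup_mono hAB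

lemma supTranslate_singleton_zero : supTranslate {0} g = g := by
  ext x
  simp [supTranslate]

lemma supTranslate_empty : supTranslate (∅ : Set E) g = 0 := by
  ext x
  simp [supTranslate]

lemma IsLogConcave.supTranslate_rpow_mul_le [Module ℝ E] (hg : IsLogConcave g) {a b : ℝ}
    (ha : 0 < a) (hb : 0 < b) (hab : a + b = 1) (x y : E) :
    supTranslate A g x ^ a * supTranslate B g y ^ b ≤
      supTranslate (a • A + b • B) g (a • x + b • y) := by
  have hpoint {z w : E} (hz : z ∈ A) (hw : w ∈ B) :
      g (x - z) ^ a * g (y - w) ^ b ≤ supTranslate (a • A + b • B) g (a • x + b • y) :=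
    calc g (x - z) ^ a * g (y - w) ^ b ≤ g (a • (x - z) + b • (y - w)) := hg ha hb hab _ _
      _ = g (a • x + b • y - (a • z + b • w)) := by rw [smul_sub, smul_sub, sub_add_sub_comm]
      _ ≤ supTranslate (a • A + b • B) g (a • x + b • y) :=
          le_supTranslate (Set.add_mem_add (smul_mem_smul_set hz) (smul_mem_smul_set hw)) _
  have hrpow {p : ℝ} (hp : 0 < p) (C : Set E) (v : E) :
      supTranslate C g v ^ p = ⨆ z ∈ C, g (v - z) ^ p := by
    rw [supTranslate, ← ENNReal.orderIsoRpow_apply p hp]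
    simp only [OrderIso.map_iSup, ENNReal.orderIsoRpow_apply]
  rw [hrpow ha, hrpow hb]
  simp only [ENNReal.iSup_mul, ENNReal.mul_iSup]
  exact iSup₂_le fun w hw => iSup₂_le fun z hz => hpoint hz hw

section Topology

variable [TopologicalSpace E] [IsTopologicalAddGroup E]

lemma exists_supTranslate_eq (hg : UpperSemicontinuous g) (hA : IsCompact A)
    (hA₀ : A.Nonempty) (x : E) : ∃ z ∈ A, supTranslate A g x = g (x - z) := by
  have hgx : UpperSemicontinuous fun z => g (x - z) := hg.comp (by fun_prop)
  obtain ⟨z, hz, hmax⟩ := (hgx.upperSemicontinuousOn A).exists_isMaxOn hA₀ hA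
  exact ⟨z, hz, le_antisymm (iSup₂_le fun w hw => hmax hw) (le_supTranslate hz x)⟩

variable [MeasurableSpace E] [BorelSpace E]

lemma measurable_supTranslate_of_continuous (hg : Continuous g) (A : Set E) :
    Measurable (supTranslate A g) :=
  (lowerSemicontinuous_biSup fun _ _ =>
    (hg.comp (continuous_id.sub continuous_const)).lowerSemicontinuous).measurable

lemma measurable_supTranslate_of_upperSemicontinuous (hg : UpperSemicontinuous g)
    (hA : IsCompact A) (hA₀ : A.Nonempty) : Measurable (supTranslate A g) := by
  refine measurable_of_Ici fun c => ?_
  have hpre : supTranslate A g ⁻¹' Ici c = g ⁻¹' Ici c + A := by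
    ext x
    constructor
    · intro hx
      obtain ⟨z, hz, hxz⟩ := exists_supTranslate_eq hg hA hA₀ x
      exact ⟨x - z, hx.trans_eq hxz, z, hz, sub_add_cancel x z⟩
    · rintro ⟨y, hy, z, hz, rfl⟩
      exact le_trans (by simpa using hy) (le_supTranslate hz (y + z))
  rw [hpre]
  exact ((hg.isClosed_preimage c).add_right_of_isCompact hA).measurableSet

end Topology

end SupTranslate

/-- The support function of a set `L`, evaluated at a linear functional; it takes the junk value `0`
when `L` is empty or the functional is unbounded above on `L`. -/
def supportFun {E : Type*} [NormedAddCommGroup E] [NormedSpace ℝ E] (L : Set E)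
    (ℓ : E →L[ℝ] ℝ) : ℝ :=
  sSup (ℓ '' L)

section SupportFun

variable {E : Type*} [NormedAddCommGroup E] [NormedSpace ℝ E] {L B : Set E}

lemma isLUB_supportFun (hL : Bornology.IsBounded L) (hL₀ : L.Nonempty) (ℓ : E →L[ℝ] ℝ) :
    IsLUB (ℓ '' L) (supportFun L ℓ) :=
  isLUB_csSup (hL₀.image ℓ) (ℓ.lipschitz.isBounded_image hL).bddAbove

lemma supportFun_add (hL : Bornology.IsBounded L) (hL₀ : L.Nonempty)
    (hB : Bornology.IsBounded B) (hB₀ : B.Nonempty) (ℓ : E →L[ℝ] ℝ) :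
    supportFun (L + B) ℓ = supportFun L ℓ + supportFun B ℓ := by
  rw [supportFun, image_add]
  exact ((isLUB_supportFun hL hL₀ ℓ).add (isLUB_supportFun hB hB₀ ℓ)).csSup_eq
    ((hL₀.image ℓ).add (hB₀.image ℓ))

lemma supportFun_closedConvexHull (hL : Bornology.IsBounded L) (hL₀ : L.Nonempty)
    (ℓ : E →L[ℝ] ℝ) : supportFun (closedConvexHull ℝ L) ℓ = supportFun L ℓ := by
  refine IsLUB.csSup_eq ⟨?_, fun s hs => ?_⟩ ((hL₀.mono subset_closedConvexHull).image ℓ)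
  · have hhull : closedConvexHull ℝ L ⊆ {z | ℓ z ≤ supportFun L ℓ} :=
      closedConvexHull_min (fun z hz => (isLUB_supportFun hL hL₀ ℓ).1 (mem_image_of_mem ℓ hz))
        (convex_halfSpace_le ℓ.toLinearMap.isLinear _)
        (isClosed_le ℓ.continuous continuous_const)
    exact forall_mem_image.2 hhull
  · exact (isLUB_supportFun hL hL₀ ℓ).2 (upperBounds_mono_set
      (image_mono subset_closedConvexHull) hs)

end SupportFun

lemma abs_sub_le_of_isLUB_image {α : Type*} {L : Set α} {F G : α → ℝ} {s s' ε : ℝ}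
    (hF : IsLUB (F '' L) s) (hG : IsLUB (G '' L) s') (hFG : ∀ z ∈ L, |F z - G z| ≤ ε) :
    |s - s'| ≤ ε := by
  have hs : s ≤ s' + ε := hF.2 <| forall_mem_image.2 fun z hz => by
    linarith [(abs_le.1 (hFG z hz)).2, hG.1 (mem_image_of_mem G hz)]
  have hs' : s' ≤ s + ε := hG.2 <| forall_mem_image.2 fun z hz => by
    linarith [(abs_le.1 (hFG z hz)).1, hF.1 (mem_image_of_mem F hz)]
  exact abs_le.2 ⟨by linarith, by linarith⟩

lemma tendsto_isLUB_image_of_tendstoUniformlyOn {α ι : Type*} {L : Set α} {l : Filter ι}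
    {F : ι → α → ℝ} {G : α → ℝ} {s : ι → ℝ} {s' : ℝ} (hFG : TendstoUniformlyOn F G l L)
    (hF : ∀ᶠ i in l, IsLUB (F i '' L) (s i)) (hG : IsLUB (G '' L) s') :
    Tendsto s l (𝓝 s') := by
  refine Metric.tendsto_nhds.2 fun ε hε => ?_
  filter_upwards [Metric.tendstoUniformlyOn_iff.1 hFG (ε / 2) (half_pos hε), hF] with i hi hFi
  refine lt_of_le_of_lt ?_ (half_lt_self hε)
  exact abs_sub_le_of_isLUB_image hFi hG fun z hz => by
    simpa only [dist_comm, Real.dist_eq] using (hi z hz).le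

section Derivative

variable {E : Type*} [NormedAddCommGroup E] [NormedSpace ℝ E] {L : Set E} {x : E}

lemma tendstoUniformlyOn_slope_sub_smul {u : E → ℝ} {u' : E →L[ℝ] ℝ} (hu : HasFDerivAt u u' x)
    (hL : Bornology.IsBounded L) :
    TendstoUniformlyOn (fun t z => (u (x - t • z) - u x) / t) ⇑(-u') (𝓝[>] (0 : ℝ)) L := by
  obtain ⟨R, hR₀, hR⟩ := hL.exists_pos_norm_le
  refine Metric.tendstoUniformlyOn_iff.2 fun ε hε => ?_
  obtain ⟨δ, hδ, hlittle⟩ := Metric.eventually_nhds_iff.1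
    (hu.isLittleO.bound (c := ε / (2 * R)) (by positivity))
  filter_upwards [Ioo_mem_nhdsGT (show 0 < δ / R by positivity)] with t ⟨ht₀, htδ⟩ z hz
  have hnorm : ‖t • z‖ ≤ t * R := by
    rw [norm_smul, Real.norm_of_nonneg ht₀.le]
    exact mul_le_mul_of_nonneg_left (hR z hz) ht₀.le
  have hdist : dist (x - t • z) x < δ := by
    rw [dist_eq_norm, sub_sub_cancel_left, norm_neg]
    exact hnorm.trans_lt ((lt_div_iff₀ hR₀).1 htδ)
  have herror : |u (x - t • z) - u x + t * u' z| ≤ ε / 2 * t := by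
    have hbound := hlittle hdist
    rw [sub_sub_cancel_left, norm_neg, map_neg, map_smul, Real.norm_eq_abs, smul_eq_mul,
      sub_neg_eq_add] at hbound
    calc |u (x - t • z) - u x + t * u' z| ≤ ε / (2 * R) * ‖t • z‖ := hbound
      _ ≤ ε / (2 * R) * (t * R) := by gcongr
      _ = ε / 2 * t := by field_simp
  have hquot : (u (x - t • z) - u x) / t - (-u') z = (u (x - t • z) - u x + t * u' z) / t := by
    rw [neg_apply]
    field_simp
    ring
  calc dist ((-u') z) ((u (x - t • z) - u x) / t)
      = |u (x - t • z) - u x + t * u' z| / t := by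
        rw [dist_comm, Real.dist_eq, hquot, abs_div, abs_of_pos ht₀]
    _ ≤ ε / 2 := (div_le_iff₀ ht₀).2 herror
    _ < ε := half_lt_self hε

lemma isLUB_slope_supTranslate {g : E → ℝ≥0∞} {t : ℝ} (ht : 0 < t) (hL₀ : L.Nonempty)
    (hfin : supTranslate (t • L) g x ≠ ⊤) :
    IsLUB ((fun z => ((g (x - t • z)).toReal - (g x).toReal) / t) '' L)
      (((supTranslate (t • L) g x).toReal - (g x).toReal) / t) := by
  constructor
  · refine forall_mem_image.2 fun z hz => ?_
    have hle := ENNReal.toReal_mono hfin (le_supTranslate (smul_mem_smul_set hz) x)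
    gcongr
  · intro s hs
    have hvalue {z : E} (hz : z ∈ L) : (g (x - t • z)).toReal ≤ s * t + (g x).toReal := by
      linarith [(div_le_iff₀ ht).1 (hs (mem_image_of_mem _ hz))]
    have hnonneg : 0 ≤ s * t + (g x).toReal :=
      ENNReal.toReal_nonneg.trans (hvalue hL₀.some_mem)
    have hsup : supTranslate (t • L) g x ≤ ENNReal.ofReal (s * t + (g x).toReal) := by
      refine iSup₂_le ?_
      rintro _ ⟨z, hz, rfl⟩
      have hgz := ne_top_of_le_ne_top hfin (le_supTranslate (smul_mem_smul_set hz) x)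
      exact (ENNReal.le_ofReal_iff_toReal_le hgz hnonneg).2 (hvalue hz)
    rw [div_le_iff₀ ht]
    linarith [ENNReal.toReal_le_of_le_ofReal hnonneg hsup]

lemma tendsto_slope_supTranslate {g : E → ℝ≥0∞} (hL : Bornology.IsBounded L) (hL₀ : L.Nonempty)
    (hg : DifferentiableAt ℝ (fun y => (g y).toReal) x)
    (hfin : ∀ᶠ t : ℝ in 𝓝[>] 0, supTranslate (t • L) g x ≠ ⊤) :
    Tendsto (fun t : ℝ => ((supTranslate (t • L) g x).toReal - (g x).toReal) / t) (𝓝[>] 0)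
      (𝓝 (supportFun L (-fderiv ℝ (fun y => (g y).toReal) x))) := by
  refine tendsto_isLUB_image_of_tendstoUniformlyOn
    (tendstoUniformlyOn_slope_sub_smul hg.hasFDerivAt hL) ?_ (isLUB_supportFun hL hL₀ _)
  filter_upwards [hfin, self_mem_nhdsWithin] with t hfin_t ht
  exact isLUB_slope_supTranslate ht hL₀ hfin_t

end Derivative

/-- `g` takes values in `(0, ∞)` and `log g` is `K`-Lipschitz; the Lipschitz bound is stated
multiplicatively in `[0, ∞]`. -/
structure IsLogLipschitz {E : Type*} [PseudoMetricSpace E] (K : ℝ≥0) (g : E → ℝ≥0∞) : Prop where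
  ne_zero : ∀ x, g x ≠ 0
  ne_top : ∀ x, g x ≠ ⊤
  le_exp_dist_mul : ∀ x y, g x ≤ ENNReal.ofReal (Real.exp (K * dist x y)) * g y

/-- The anisotropic variation `∫ h_L(-∇g)` of a finite function `g`, where `h_L` is the support
function of `L`. -/
def anisotropicVariation {E : Type*} [NormedAddCommGroup E] [NormedSpace ℝ E] [MeasurableSpace E]
    (μ : Measure E) (L : Set E) (g : E → ℝ≥0∞) : ℝ :=
  ∫ x, supportFun L (-fderiv ℝ (fun y => (g y).toReal) x) ∂μ

namespace IsLogLipschitz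

section Metric

variable {E : Type*} [PseudoMetricSpace E] {K : ℝ≥0} {g : E → ℝ≥0∞}

lemma lipschitzWith_log (hg : IsLogLipschitz K g) :
    LipschitzWith K fun x => Real.log (g x).toReal := by
  have hpos (x : E) : 0 < (g x).toReal := ENNReal.toReal_pos (hg.ne_zero x) (hg.ne_top x)
  refine LipschitzWith.of_le_add_mul K fun x y => ?_
  have hle := ENNReal.toReal_mono (ENNReal.mul_ne_top ENNReal.ofReal_ne_top (hg.ne_top y))
    (hg.le_exp_dist_mul x y)
  rw [ENNReal.toReal_mul, ENNReal.toReal_ofReal (Real.exp_pos _).le] at hle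
  calc Real.log (g x).toReal ≤ Real.log (Real.exp (K * dist x y) * (g y).toReal) :=
        Real.log_le_log (hpos x) hle
    _ = Real.log (g y).toReal + K * dist x y := by
        rw [Real.log_mul (Real.exp_pos _).ne' (hpos y).ne', Real.log_exp, add_comm]

lemma toReal_eq_exp_log (hg : IsLogLipschitz K g) :
    (fun x => (g x).toReal) = fun x => Real.exp (Real.log (g x).toReal) :=
  funext fun x => (Real.exp_log (ENNReal.toReal_pos (hg.ne_zero x) (hg.ne_top x))).symm

lemma continuous (hg : IsLogLipschitz K g) : Continuous g := by
  have hreal : Continuous fun x => (g x).toReal := by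
    rw [hg.toReal_eq_exp_log]
    exact Real.continuous_exp.comp hg.lipschitzWith_log.continuous
  exact (ENNReal.continuous_ofReal.comp hreal).congr fun x => ENNReal.ofReal_toReal (hg.ne_top x)

end Metric

section Normed

variable {E : Type*} [NormedAddCommGroup E] {K : ℝ≥0} {g : E → ℝ≥0∞} {A : Set E} {R : ℝ}

lemma supTranslate_le (hg : IsLogLipschitz K g) (hA : ∀ z ∈ A, ‖z‖ ≤ R) (x : E) :
    supTranslate A g x ≤ ENNReal.ofReal (Real.exp (K * R)) * g x := by
  refine iSup₂_le fun z hz => (hg.le_exp_dist_mul (x - z) x).trans ?_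
  gcongr
  simpa using hA z hz

lemma supTranslate_ne_top (hg : IsLogLipschitz K g) (hA : ∀ z ∈ A, ‖z‖ ≤ R) (x : E) :
    supTranslate A g x ≠ ⊤ :=
  ne_top_of_le_ne_top (ENNReal.mul_ne_top ENNReal.ofReal_ne_top (hg.ne_top x))
    (hg.supTranslate_le hA x)

lemma le_exp_mul_supTranslate (hg : IsLogLipschitz K g) (hA : ∀ z ∈ A, ‖z‖ ≤ R)
    (hA₀ : A.Nonempty) (x : E) :
    g x ≤ ENNReal.ofReal (Real.exp (K * R)) * supTranslate A g x := by
  obtain ⟨z, hz⟩ := hA₀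
  refine (hg.le_exp_dist_mul x (x - z)).trans ?_
  gcongr
  · simpa using hA z hz
  · exact le_supTranslate hz x

lemma abs_supTranslate_sub_le (hg : IsLogLipschitz K g) (hA : ∀ z ∈ A, ‖z‖ ≤ R)
    (hA₀ : A.Nonempty) (x : E) :
    |(supTranslate A g x).toReal - (g x).toReal| ≤
      K * R * Real.exp (K * R) * (g x).toReal := by
  have hR : 0 ≤ R := (norm_nonneg _).trans (hA _ hA₀.some_mem)
  have hupper : (supTranslate A g x).toReal ≤ Real.exp (K * R) * (g x).toReal := by
    simpa [ENNReal.toReal_ofReal (Real.exp_pos _).le] using ENNReal.toReal_mono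
      (ENNReal.mul_ne_top ENNReal.ofReal_ne_top (hg.ne_top x)) (hg.supTranslate_le hA x)
  have hlower : (g x).toReal ≤ Real.exp (K * R) * (supTranslate A g x).toReal := by
    simpa [ENNReal.toReal_ofReal (Real.exp_pos _).le] using ENNReal.toReal_mono
      (ENNReal.mul_ne_top ENNReal.ofReal_ne_top (hg.supTranslate_ne_top hA x))
      (hg.le_exp_mul_supTranslate hA hA₀ x)
  have hexp : Real.exp (K * R) - 1 ≤ K * R * Real.exp (K * R) := by
    have hneg := mul_le_mul_of_nonneg_right (Real.add_one_le_exp (-(K * R)))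
      (Real.exp_pos (K * R)).le
    rw [← Real.exp_add, neg_add_cancel, Real.exp_zero] at hneg
    linarith
  have hgap : |(supTranslate A g x).toReal - (g x).toReal| ≤
      (Real.exp (K * R) - 1) * (g x).toReal := by
    have hexp_one : 1 ≤ Real.exp (K * R) := Real.one_le_exp (by positivity)
    have hgx : 0 ≤ (g x).toReal := ENNReal.toReal_nonneg
    refine abs_le.2 ⟨?_, by linarith⟩
    by_contra! hlt
    nlinarith [hgx]
  exact hgap.trans (by gcongr)

lemma abs_slope_supTranslate_le [NormedSpace ℝ E] (hg : IsLogLipschitz K g)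
    (hA : ∀ z ∈ A, ‖z‖ ≤ R) (hA₀ : A.Nonempty) {t : ℝ} (ht : t ∈ Ioo (0 : ℝ) 1) (x : E) :
    |((supTranslate (t • A) g x).toReal - (g x).toReal) / t| ≤
      K * R * Real.exp (K * R) * (g x).toReal := by
  have hR : 0 ≤ R := (norm_nonneg _).trans (hA _ hA₀.some_mem)
  have htA : ∀ z ∈ t • A, ‖z‖ ≤ t * R := by
    rintro _ ⟨z, hz, rfl⟩
    simpa [norm_smul, abs_of_pos ht.1] using mul_le_mul_of_nonneg_left (hA z hz) ht.1.le
  rw [abs_div, abs_of_pos ht.1, div_le_iff₀ ht.1]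
  calc |(supTranslate (t • A) g x).toReal - (g x).toReal|
      ≤ K * (t * R) * Real.exp (K * (t * R)) * (g x).toReal :=
        hg.abs_supTranslate_sub_le htA hA₀.smul_set x
    _ ≤ K * (t * R) * Real.exp (K * (1 * R)) * (g x).toReal := by
        have := ht.1.le
        gcongr
        exact ht.2.le
    _ = K * R * Real.exp (K * R) * (g x).toReal * t := by
        rw [one_mul]
        ring

lemma tendsto_slope_supTranslate [NormedSpace ℝ E] (hg : IsLogLipschitz K g)
    (hA : Bornology.IsBounded A) (hA₀ : A.Nonempty) {x : E}
    (hx : DifferentiableAt ℝ (fun y => (g y).toReal) x) :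
    Tendsto (fun t : ℝ => ((supTranslate (t • A) g x).toReal - (g x).toReal) / t) (𝓝[>] 0)
      (𝓝 (supportFun A (-fderiv ℝ (fun y => (g y).toReal) x))) :=
  _root_.tendsto_slope_supTranslate hA hA₀ hx <| .of_forall fun t =>
    let ⟨_, hR⟩ := (hA.smul₀ t).exists_norm_le
    hg.supTranslate_ne_top hR x

variable [MeasurableSpace E] [BorelSpace E] {μ : Measure E}

lemma lintegral_supTranslate_ne_top (hg : IsLogLipschitz K g) (hfin : ∫⁻ x, g x ∂μ ≠ ⊤)
    (hA : Bornology.IsBounded A) : ∫⁻ x, supTranslate A g x ∂μ ≠ ⊤ := by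
  obtain ⟨R, hR⟩ := hA.exists_norm_le
  refine ne_top_of_le_ne_top ?_ (lintegral_mono (hg.supTranslate_le hR))
  rw [lintegral_const_mul _ hg.continuous.measurable]
  exact ENNReal.mul_ne_top ENNReal.ofReal_ne_top hfin

lemma measurable_slope_supTranslate [NormedSpace ℝ E] (hg : IsLogLipschitz K g)
    (A : Set E) (t : ℝ) :
    Measurable fun x => ((supTranslate (t • A) g x).toReal - (g x).toReal) / t :=
  ((measurable_supTranslate_of_continuous hg.continuous _).ennreal_toReal.sub
    hg.continuous.measurable.ennreal_toReal).div_const t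

lemma integral_slope_supTranslate [NormedSpace ℝ E] (hg : IsLogLipschitz K g)
    (hfin : ∫⁻ x, g x ∂μ ≠ ⊤) (hA : Bornology.IsBounded A) (t : ℝ) :
    ∫ x, ((supTranslate (t • A) g x).toReal - (g x).toReal) / t ∂μ =
      ((∫⁻ x, supTranslate (t • A) g x ∂μ).toReal - (∫⁻ x, g x ∂μ).toReal) / t := by
  have hmeas : AEMeasurable (supTranslate (t • A) g) μ :=
    (measurable_supTranslate_of_continuous hg.continuous _).aemeasurable
  have hmeas' : AEMeasurable g μ := hg.continuous.measurable.aemeasurable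
  have hfin' := hg.lintegral_supTranslate_ne_top hfin (hA.smul₀ t)
  rw [integral_div, integral_sub (integrable_toReal_of_lintegral_ne_top hmeas hfin')
      (integrable_toReal_of_lintegral_ne_top hmeas' hfin),
    integral_toReal hmeas (ae_lt_top' hmeas hfin'), integral_toReal hmeas' (ae_lt_top' hmeas' hfin)]

end Normed

section Haar

variable {E : Type*} [NormedAddCommGroup E] [NormedSpace ℝ E] [FiniteDimensional ℝ E]
  [MeasurableSpace E] [BorelSpace E] {μ : Measure E} [μ.IsAddHaarMeasure]
  {K : ℝ≥0} {g : E → ℝ≥0∞} {L B : Set E}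

lemma ae_differentiableAt_toReal (hg : IsLogLipschitz K g) :
    ∀ᵐ x ∂μ, DifferentiableAt ℝ (fun y => (g y).toReal) x := by
  filter_upwards [hg.lipschitzWith_log.ae_differentiableAt (μ := μ)] with x hx
  rw [hg.toReal_eq_exp_log]
  exact hx.exp

lemma integrable_supportFun_neg_fderiv (hg : IsLogLipschitz K g) (hfin : ∫⁻ x, g x ∂μ ≠ ⊤)
    (hL : Bornology.IsBounded L) (hL₀ : L.Nonempty) :
    Integrable (fun x => supportFun L (-fderiv ℝ (fun y => (g y).toReal) x)) μ := by
  obtain ⟨R, hR⟩ := hL.exists_norm_le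
  have hint : Integrable (fun x => (g x).toReal) μ :=
    integrable_toReal_of_lintegral_ne_top hg.continuous.measurable.aemeasurable hfin
  refine (hint.const_mul (K * R * Real.exp (K * R))).mono' ?_ ?_
  · refine aestronglyMeasurable_of_tendsto_ae (𝓝[>] (0 : ℝ))
      (fun t => (hg.measurable_slope_supTranslate L t).aestronglyMeasurable) ?_
    filter_upwards [hg.ae_differentiableAt_toReal] with x hx
    exact hg.tendsto_slope_supTranslate hL hL₀ hx
  · filter_upwards [hg.ae_differentiableAt_toReal] with x hx
    refine le_of_tendsto (hg.tendsto_slope_supTranslate hL hL₀ hx).norm ?_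
    filter_upwards [Ioo_mem_nhdsGT one_pos] with t ht
    exact hg.abs_slope_supTranslate_le hR hL₀ ht x

lemma tendsto_slope_lintegral_supTranslate (hg : IsLogLipschitz K g) (hfin : ∫⁻ x, g x ∂μ ≠ ⊤)
    (hL : Bornology.IsBounded L) (hL₀ : L.Nonempty) :
    Tendsto (fun t : ℝ =>
        ((∫⁻ x, supTranslate (t • L) g x ∂μ).toReal - (∫⁻ x, g x ∂μ).toReal) / t)
      (𝓝[>] 0) (𝓝 (anisotropicVariation μ L g)) := by
  obtain ⟨R, hR⟩ := hL.exists_norm_le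
  simp only [← hg.integral_slope_supTranslate hfin hL]
  refine tendsto_integral_filter_of_dominated_convergence
    (fun x => K * R * Real.exp (K * R) * (g x).toReal) ?_ ?_ ?_ ?_
  · exact .of_forall fun t => (hg.measurable_slope_supTranslate L t).aestronglyMeasurable
  · filter_upwards [Ioo_mem_nhdsGT one_pos] with t ht
    exact .of_forall fun x => hg.abs_slope_supTranslate_le hR hL₀ ht x
  · exact (integrable_toReal_of_lintegral_ne_top hg.continuous.measurable.aemeasurable
      hfin).const_mul _
  · filter_upwards [hg.ae_differentiableAt_toReal] with x hx
    exact hg.tendsto_slope_supTranslate hL hL₀ hx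

lemma anisotropicVariation_add (hg : IsLogLipschitz K g) (hfin : ∫⁻ x, g x ∂μ ≠ ⊤)
    (hL : Bornology.IsBounded L) (hL₀ : L.Nonempty) (hB : Bornology.IsBounded B)
    (hB₀ : B.Nonempty) :
    anisotropicVariation μ (L + B) g = anisotropicVariation μ L g + anisotropicVariation μ B g := by
  simp only [anisotropicVariation, supportFun_add hL hL₀ hB hB₀]
  exact integral_add (hg.integrable_supportFun_neg_fderiv hfin hL hL₀)
    (hg.integrable_supportFun_neg_fderiv hfin hB hB₀)

end Haar

end IsLogLipschitz

lemma anisotropicVariation_closedConvexHull {E : Type*} [NormedAddCommGroup E] [NormedSpace ℝ E]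
    [MeasurableSpace E] (μ : Measure E) {L : Set E} (hL : Bornology.IsBounded L)
    (hL₀ : L.Nonempty) (g : E → ℝ≥0∞) :
    anisotropicVariation μ (closedConvexHull ℝ L) g = anisotropicVariation μ L g := by
  simp only [anisotropicVariation, supportFun_closedConvexHull hL hL₀]

lemma le_mul_exp_of_rpow_mul_rpow_le {F : ℝ → ℝ} {m D t : ℝ} (hm : 0 < m) (ht : 0 < t)
    (hFt : 0 ≤ F t) (hF : ∀ a ∈ Ioo (0 : ℝ) 1, F t ^ a * m ^ (1 - a) ≤ F (a * t))
    (hD : Tendsto (fun s => (F s - m) / s) (𝓝[>] 0) (𝓝 D)) :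
    F t ≤ m * Real.exp (t * D / m) := by
  obtain hzero | hpos := hFt.eq_or_lt
  · rw [← hzero]
    positivity
  have hslope (a : ℝ) (ha : a ∈ Ioo (0 : ℝ) 1) :
      Real.log (F t / m) ≤ t / m * ((F (a * t) - m) / (a * t)) := by
    have hexp : m * Real.exp (a * Real.log (F t / m)) = F t ^ a * m ^ (1 - a) := by
      rw [mul_comm a, ← Real.rpow_def_of_pos (by positivity), Real.div_rpow hFt hm.le,
        Real.rpow_sub hm, Real.rpow_one]
      ring
    have htangent := mul_le_mul_of_nonneg_left (Real.add_one_le_exp (a * Real.log (F t / m))) hm.le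
    rw [hexp] at htangent
    have := hF a ha
    have ha₀ := ha.1
    calc Real.log (F t / m) = m * (a * Real.log (F t / m)) / (m * a) := by field_simp
      _ ≤ (F (a * t) - m) / (m * a) := by
          gcongr
          linarith
      _ = t / m * ((F (a * t) - m) / (a * t)) := by field_simp
  have hscale : Tendsto (fun a => a * t) (𝓝[>] 0) (𝓝[>] 0) := by
    refine tendsto_nhdsWithin_iff.2 ⟨?_, ?_⟩
    · exact ((continuous_mul_const t).tendsto' 0 0 (zero_mul t)).mono_left nhdsWithin_le_nhds
    · filter_upwards [self_mem_nhdsWithin] with a ha using mul_pos ha ht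
  have hlog : Real.log (F t / m) ≤ t / m * D :=
    ge_of_tendsto ((hD.comp hscale).const_mul _) <| by
      filter_upwards [Ioo_mem_nhdsGT one_pos] with a ha using hslope a ha
  rw [Real.log_le_iff_le_exp (by positivity), div_le_iff₀ hm] at hlog
  rwa [mul_comm m, mul_div_right_comm]

section Growth

variable {E : Type*} [NormedAddCommGroup E] [NormedSpace ℝ E] [FiniteDimensional ℝ E]
  [MeasurableSpace E] [BorelSpace E] (μ : Measure E) [μ.IsAddHaarMeasure]
  {g : E → ℝ≥0∞} {K : ℝ≥0} {L : Set E}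

lemma IsLogConcave.lintegral_supTranslate_rpow_mul_le (hg : IsLogConcave g) (hcont : Continuous g)
    (A B : Set E) {a b : ℝ} (ha : 0 < a) (hb : 0 < b) (hab : a + b = 1) :
    (∫⁻ x, supTranslate A g x ∂μ) ^ a * (∫⁻ x, supTranslate B g x ∂μ) ^ b ≤
      ∫⁻ x, supTranslate (a • A + b • B) g x ∂μ :=
  satisfiesPrekopaLeindler_addHaar μ ha hb hab (measurable_supTranslate_of_continuous hcont A)
    (measurable_supTranslate_of_continuous hcont B) (measurable_supTranslate_of_continuous hcont _)
    fun x y => hg.supTranslate_rpow_mul_le ha hb hab x y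

variable {μ}

lemma IsLogConcave.toReal_lintegral_supTranslate_smul_rpow_mul_le (hg : IsLogConcave g)
    (hlip : IsLogLipschitz K g) (hfin : ∫⁻ x, g x ∂μ ≠ ⊤) (hL : Bornology.IsBounded L)
    {a : ℝ} (ha : a ∈ Ioo (0 : ℝ) 1) (t : ℝ) :
    (∫⁻ x, supTranslate (t • L) g x ∂μ).toReal ^ a * (∫⁻ x, g x ∂μ).toReal ^ (1 - a) ≤
      (∫⁻ x, supTranslate ((a * t) • L) g x ∂μ).toReal := by
  have hle := hg.lintegral_supTranslate_rpow_mul_le μ hlip.continuous (t • L) {0} ha.1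
    (sub_pos.2 ha.2) (add_sub_cancel a 1)
  rw [supTranslate_singleton_zero, smul_set_singleton, smul_zero, singleton_zero, add_zero,
    smul_smul] at hle
  simpa only [ENNReal.toReal_mul, ENNReal.toReal_rpow] using
    ENNReal.toReal_mono (hlip.lintegral_supTranslate_ne_top hfin (hL.smul₀ _)) hle

lemma IsLogConcave.lintegral_supTranslate_smul_le_exp (hg : IsLogConcave g)
    (hlip : IsLogLipschitz K g) (hfin : ∫⁻ x, g x ∂μ ≠ ⊤) (hL : Bornology.IsBounded L)
    (hL₀ : L.Nonempty) {t : ℝ} (ht : 0 < t) :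
    ∫⁻ x, supTranslate (t • L) g x ∂μ ≤
      ENNReal.ofReal ((∫⁻ x, g x ∂μ).toReal *
        Real.exp (t * anisotropicVariation μ L g / (∫⁻ x, g x ∂μ).toReal)) := by
  have hpos : 0 < (∫⁻ x, g x ∂μ).toReal := by
    refine ENNReal.toReal_pos (fun hzero => ?_) hfin
    rw [lintegral_eq_zero_iff hlip.continuous.measurable] at hzero
    obtain ⟨x, hx⟩ := hzero.exists
    exact hlip.ne_zero x hx
  refine (ENNReal.le_ofReal_iff_toReal_le ?_ (by positivity)).2 ?_
  · exact hlip.lintegral_supTranslate_ne_top hfin (hL.smul₀ t)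
  · exact le_mul_exp_of_rpow_mul_rpow_le hpos ht ENNReal.toReal_nonneg
      (fun a ha => hg.toReal_lintegral_supTranslate_smul_rpow_mul_le hlip hfin hL ha t)
      (hlip.tendsto_slope_lintegral_supTranslate hfin hL hL₀)

end Growth

lemma integrable_exp_neg_norm {E : Type*} [NormedAddCommGroup E] [NormedSpace ℝ E]
    [FiniteDimensional ℝ E] [MeasurableSpace E] [BorelSpace E] (μ : Measure E)
    [μ.IsAddHaarMeasure] : Integrable (fun v : E => Real.exp (-‖v‖)) μ := by
  set d := Module.finrank ℝ E
  have hdecay : Integrable (fun v : E => (1 + ‖v‖) ^ (-((d + 1 : ℕ) : ℝ))) μ :=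
    integrable_one_add_norm (mod_cast d.lt_succ_self)
  refine (hdecay.const_mul ((d + 1).factorial * Real.exp 1)).mono' (by fun_prop) ?_
  refine .of_forall fun v => ?_
  have hexp := Real.pow_div_factorial_le_exp (1 + ‖v‖) (by positivity) (d + 1)
  rw [Real.exp_add, div_le_iff₀ (by positivity)] at hexp
  rw [Real.norm_eq_abs, Real.abs_exp, Real.rpow_neg (by positivity), Real.rpow_natCast,
    Real.exp_neg, ← div_eq_mul_inv, le_div_iff₀ (by positivity),
    inv_mul_le_iff₀ (Real.exp_pos _)]
  linarith

/-- The Laplace kernel `e^{-‖w‖}`, normalised to a probability density with respect to `μ`. Its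
logarithm is concave and `1`-Lipschitz, and mollification inherits both properties. -/
def laplaceDensity {E : Type*} [NormedAddCommGroup E] [MeasurableSpace E] (μ : Measure E) (w : E) :
    ℝ≥0∞ :=
  (∫⁻ v, ENNReal.ofReal (Real.exp (-‖v‖)) ∂μ)⁻¹ * ENNReal.ofReal (Real.exp (-‖w‖))

/-- The convolution of `g` with the Laplace density at scale `ε`. -/
def mollify {E : Type*} [NormedAddCommGroup E] [NormedSpace ℝ E] [MeasurableSpace E]
    (μ : Measure E) (ε : ℝ) (g : E → ℝ≥0∞) (x : E) : ℝ≥0∞ :=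
  ∫⁻ w, g (x - ε • w) * laplaceDensity μ w ∂μ

section LaplaceDensity

variable {E : Type*} [NormedAddCommGroup E] [MeasurableSpace E] (μ : Measure E)

lemma laplaceDensity_le_exp_mul (x y : E) :
    laplaceDensity μ x ≤ ENNReal.ofReal (Real.exp (dist x y)) * laplaceDensity μ y := by
  unfold laplaceDensity
  rw [mul_left_comm, ← ENNReal.ofReal_mul (Real.exp_pos _).le, ← Real.exp_add]
  gcongr
  linarith [norm_sub_norm_le y x, dist_eq_norm y x, dist_comm x y]

@[fun_prop]
lemma measurable_laplaceDensity [BorelSpace E] : Measurable (laplaceDensity μ) := by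
  unfold laplaceDensity
  fun_prop

variable [NormedSpace ℝ E]

lemma isLogConcave_laplaceDensity : IsLogConcave (laplaceDensity μ) := by
  intro a b ha hb hab x y
  set C := ∫⁻ v, ENNReal.ofReal (Real.exp (-‖v‖)) ∂μ
  have hnorm : ‖a • x + b • y‖ ≤ a * ‖x‖ + b * ‖y‖ := by
    simpa [norm_smul, abs_of_pos ha, abs_of_pos hb] using norm_add_le (a • x) (b • y)
  calc laplaceDensity μ x ^ a * laplaceDensity μ y ^ b
      = C⁻¹ ^ a * C⁻¹ ^ b *
          (ENNReal.ofReal (Real.exp (-‖x‖)) ^ a * ENNReal.ofReal (Real.exp (-‖y‖)) ^ b) := by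
        simp only [laplaceDensity, ENNReal.mul_rpow_of_nonneg _ _ ha.le,
          ENNReal.mul_rpow_of_nonneg _ _ hb.le]
        exact mul_mul_mul_comm _ _ _ _
    _ = C⁻¹ * ENNReal.ofReal (Real.exp (-(a * ‖x‖ + b * ‖y‖))) := by
        rw [← ENNReal.rpow_add_of_nonneg a b ha.le hb.le, hab, ENNReal.rpow_one,
          ENNReal.ofReal_rpow_of_pos (Real.exp_pos _), ENNReal.ofReal_rpow_of_pos (Real.exp_pos _),
          ← ENNReal.ofReal_mul (by positivity), ← Real.exp_mul, ← Real.exp_mul, ← Real.exp_add]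
        congr 3
        ring
    _ ≤ laplaceDensity μ (a • x + b • y) := by
        unfold laplaceDensity
        gcongr

lemma lintegral_laplaceDensity [FiniteDimensional ℝ E] [BorelSpace E] [μ.IsAddHaarMeasure] :
    ∫⁻ w, laplaceDensity μ w ∂μ = 1 := by
  unfold laplaceDensity
  rw [lintegral_const_mul _ (by fun_prop)]
  refine ENNReal.inv_mul_cancel (fun hzero => ?_) (integrable_exp_neg_norm μ).lintegral_lt_top.ne
  rw [lintegral_eq_zero_iff (by fun_prop)] at hzero
  obtain ⟨v, hv⟩ := hzero.exists
  exact (Real.exp_pos _).not_ge (ENNReal.ofReal_eq_zero.1 hv)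

end LaplaceDensity

section Mollify

variable {E : Type*} [NormedAddCommGroup E] [NormedSpace ℝ E] [MeasurableSpace E]
  [BorelSpace E] {μ : Measure E} [μ.IsAddHaarMeasure] {g : E → ℝ≥0∞} {ε : ℝ} {A : Set E}

lemma mollify_le_exp_mul (hg : Measurable g) (hε : 0 < ε) (x y : E) :
    mollify μ ε g x ≤ ENNReal.ofReal (Real.exp (ε⁻¹ * dist x y)) * mollify μ ε g y := by
  unfold mollify
  rw [← lintegral_add_right_eq_self _ (ε⁻¹ • (x - y)), ← lintegral_const_mul _ (by fun_prop)]
  refine lintegral_mono fun w => ?_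
  have hcancel : x - ε • (w + ε⁻¹ • (x - y)) = y - ε • w := by
    rw [smul_add, smul_inv_smul₀ hε.ne']
    abel
  have hdist : dist (w + ε⁻¹ • (x - y)) w = ε⁻¹ * dist x y := by
    rw [dist_eq_norm, add_sub_cancel_left, norm_smul, norm_inv, Real.norm_of_nonneg hε.le,
      dist_eq_norm]
  simp only [hcancel]
  rw [mul_left_comm, ← hdist]
  gcongr
  exact laplaceDensity_le_exp_mul μ _ w

variable [FiniteDimensional ℝ E]

lemma lintegral_mollify (hg : Measurable g) : ∫⁻ x, mollify μ ε g x ∂μ = ∫⁻ x, g x ∂μ := by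
  calc ∫⁻ x, mollify μ ε g x ∂μ
      = ∫⁻ w, ∫⁻ x, g (x - ε • w) * laplaceDensity μ w ∂μ ∂μ := by
        refine lintegral_lintegral_swap (Measurable.aemeasurable ?_)
        exact (hg.comp (by fun_prop)).mul ((measurable_laplaceDensity μ).comp measurable_snd)
    _ = ∫⁻ w, (∫⁻ x, g x ∂μ) * laplaceDensity μ w ∂μ := by
        congr with w
        rw [lintegral_mul_const _ (by fun_prop), lintegral_sub_right_eq_self g]
    _ = ∫⁻ x, g x ∂μ := by
        rw [lintegral_const_mul _ (by fun_prop), lintegral_laplaceDensity, mul_one]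

lemma isLogLipschitz_mollify (hg : Measurable g) (hg0 : ∫⁻ x, g x ∂μ ≠ 0)
    (hfin : ∫⁻ x, g x ∂μ ≠ ⊤) (hε : 0 < ε) :
    IsLogLipschitz (Real.toNNReal ε⁻¹) (mollify μ ε g) where
  ne_zero x hx := by
    have hzero (y : E) : mollify μ ε g y = 0 := by
      simpa [hx] using mollify_le_exp_mul (μ := μ) hg hε y x
    apply hg0
    simp [← lintegral_mollify (ε := ε) hg, hzero]
  ne_top x hx := by
    have htop (y : E) : mollify μ ε g y = ⊤ := by
      by_contra hy
      exact ENNReal.mul_ne_top ENNReal.ofReal_ne_top hy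
        (top_le_iff.1 (hx ▸ mollify_le_exp_mul hg hε x y))
    apply hfin
    simp [← lintegral_mollify (ε := ε) hg, htop, NeZero.ne μ]
  le_exp_dist_mul x y := by
    rw [Real.coe_toNNReal _ (inv_nonneg.2 hε.le)]
    exact mollify_le_exp_mul hg hε x y

protected lemma IsLogConcave.mollify (hlc : IsLogConcave g) (hg : Measurable g) :
    IsLogConcave (mollify μ ε g) := by
  intro a b ha hb hab x y
  refine satisfiesPrekopaLeindler_addHaar μ ha hb hab (by fun_prop) (by fun_prop) (by fun_prop)
    fun v w => ?_
  have hcomb : a • x + b • y - ε • (a • v + b • w) = a • (x - ε • v) + b • (y - ε • w) := by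
    module
  rw [ENNReal.mul_rpow_of_nonneg _ _ ha.le, ENNReal.mul_rpow_of_nonneg _ _ hb.le,
    mul_mul_mul_comm, hcomb]
  exact mul_le_mul' (hlc ha hb hab _ _) (isLogConcave_laplaceDensity μ ha hb hab v w)

lemma lintegral_supTranslate_mollify_le (hA : Measurable (supTranslate A g)) :
    ∫⁻ x, supTranslate A (mollify μ ε g) x ∂μ ≤ ∫⁻ x, supTranslate A g x ∂μ := by
  rw [← lintegral_mollify (ε := ε) hA]
  refine lintegral_mono fun x => iSup₂_le fun z hz => lintegral_mono fun w => ?_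
  gcongr
  rw [sub_right_comm]
  exact le_supTranslate hz _

end Mollify

lemma continuous_ennreal_const_rpow {s : ℝ≥0∞} (hs0 : s ≠ 0) (hs : s ≠ ⊤) :
    Continuous fun a : ℝ => s ^ a := by
  lift s to ℝ≥0 using hs
  have hs0' : s ≠ 0 := by simpa using hs0
  simp only [← ENNReal.coe_rpow_of_ne_zero hs0']
  exact ENNReal.continuous_coe.comp <| continuous_iff_continuousAt.2 fun a =>
    (NNReal.continuousAt_rpow (x := s) (y := a) (Or.inl hs0')).comp₂ continuousAt_const
      continuousAt_id

lemma tendsto_ennreal_const_rpow_one (s : ℝ≥0∞) : Tendsto (fun a : ℝ => s ^ a) (𝓝 1) (𝓝 s) := by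
  have hpos : ∀ᶠ a : ℝ in 𝓝 1, 0 < a := lt_mem_nhds one_pos
  rcases eq_or_ne s 0 with rfl | hs0
  · exact tendsto_const_nhds.congr' (hpos.mono fun a ha => (ENNReal.zero_rpow_of_pos ha).symm)
  rcases eq_or_ne s ⊤ with rfl | hs
  · exact tendsto_const_nhds.congr' (hpos.mono fun a ha => (ENNReal.top_rpow_of_pos ha).symm)
  · exact (continuous_ennreal_const_rpow hs0 hs).tendsto' 1 s (ENNReal.rpow_one s)

section Approximation

variable {E : Type*} [NormedAddCommGroup E] [NormedSpace ℝ E] [MeasurableSpace E] [BorelSpace E]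
  {μ : Measure E} {g : E → ℝ≥0∞} {x₀ z₀ : E} {r a b ε : ℝ} {c : ℝ≥0∞} {A : Set E}

/-- Contracting `y` towards the centre of a ball on which `g ≥ c` makes room for a mollification
kernel of radius `b * r`. -/
lemma IsLogConcave.rpow_mul_le_mollify (hg : IsLogConcave g)
    (hc : ∀ x ∈ Metric.ball x₀ r, c ≤ g x) (ha : 0 < a) (hb : 0 < b) (hab : a + b = 1)
    (hε : 0 < ε) (y : E) :
    (∫⁻ w in Metric.ball 0 (b * r / ε), laplaceDensity μ w ∂μ) * c ^ b * g y ^ a ≤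
      mollify μ ε g (a • y + b • x₀) := by
  rw [mul_assoc, ← lintegral_mul_const _ (measurable_laplaceDensity μ)]
  refine (setLIntegral_mono' measurableSet_ball fun w hw => ?_).trans
    (setLIntegral_le_lintegral (Metric.ball 0 (b * r / ε)) _)
  have hcomb : a • y + b • x₀ - ε • w = a • y + b • (x₀ - (ε / b) • w) := by
    rw [smul_sub, smul_smul, mul_div_cancel₀ _ hb.ne']
    abel
  have hball : x₀ - (ε / b) • w ∈ Metric.ball x₀ r := by
    rw [mem_ball_zero_iff, lt_div_iff₀ hε] at hw
    rw [mem_ball_iff_norm, sub_sub_cancel_left, norm_neg, norm_smul,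
      Real.norm_of_nonneg (by positivity), div_mul_eq_mul_div, div_lt_iff₀ hb]
    linarith
  rw [mul_comm]
  gcongr
  calc c ^ b * g y ^ a ≤ g y ^ a * g (x₀ - (ε / b) • w) ^ b := by
        rw [mul_comm]
        gcongr
        exact hc _ hball
    _ ≤ g (a • y + b • x₀ - ε • w) := hcomb ▸ hg ha hb hab _ _

lemma IsLogConcave.supTranslate_rpow_mul_le_supTranslate_mollify (hg : IsLogConcave g)
    (hc : ∀ x ∈ Metric.ball x₀ r, c ≤ g x) (hA : Convex ℝ A) (hz₀ : z₀ ∈ A) (ha : 0 < a)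
    (hb : 0 < b) (hab : a + b = 1) (hε : 0 < ε) (x : E) :
    (∫⁻ w in Metric.ball 0 (b * r / ε), laplaceDensity μ w ∂μ) * c ^ b * supTranslate A g x ^ a ≤
      supTranslate A (mollify μ ε g) (a • x + b • (x₀ + z₀)) := by
  have hsup : supTranslate A g x ^ a = ⨆ z ∈ A, g (x - z) ^ a :=
    (ENNReal.orderIsoRpow a ha).map_iSup₂ _
  simp only [hsup, ENNReal.mul_iSup]
  refine iSup₂_le fun z hz => (hg.rpow_mul_le_mollify hc ha hb hab hε (x - z)).trans ?_
  have hcomb : a • (x - z) + b • x₀ = a • x + b • (x₀ + z₀) - (a • z + b • z₀) := by module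
  rw [hcomb]
  exact le_supTranslate (hA hz hz₀ ha.le hb.le hab) _

variable [FiniteDimensional ℝ E] [μ.IsAddHaarMeasure]

lemma ofReal_mul_lintegral_comp_smul_add {G : E → ℝ≥0∞} (hG : Measurable G) (ha : 0 < a) (v : E) :
    ENNReal.ofReal (a ^ Module.finrank ℝ E) * ∫⁻ x, G (a • x + v) ∂μ = ∫⁻ x, G x ∂μ := by
  have hpow : 0 < a ^ Module.finrank ℝ E := by positivity
  rw [← lintegral_map (f := fun x => G (x + v)) (g := fun x => a • x) (by fun_prop) (by fun_prop),
    Measure.map_addHaar_smul μ ha.ne', lintegral_smul_measure, smul_eq_mul,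
    lintegral_add_right_eq_self, ← mul_assoc, ← ENNReal.ofReal_mul hpow.le, abs_inv,
    abs_of_pos hpow, mul_inv_cancel₀ hpow.ne', ENNReal.ofReal_one, one_mul]

lemma tendsto_setLIntegral_ball_laplaceDensity {s : ℝ} (hs : 0 < s) :
    Tendsto (fun ε : ℝ => ∫⁻ w in Metric.ball 0 (s / ε), laplaceDensity μ w ∂μ) (𝓝[>] 0)
      (𝓝 1) := by
  have hradius : Tendsto (fun ε : ℝ => s / ε) (𝓝[>] 0) atTop := by
    simpa only [div_eq_mul_inv] using tendsto_inv_nhdsGT_zero.const_mul_atTop hs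
  rw [← lintegral_laplaceDensity μ]
  exact (aecover_ball hradius).lintegral_tendsto_of_countably_generated
    (measurable_laplaceDensity μ).aemeasurable

lemma IsLogConcave.mul_lintegral_supTranslate_rpow_le_lintegral_mollify (hg : IsLogConcave g)
    (hgm : Measurable g) (hg0 : ∫⁻ x, g x ∂μ ≠ 0) (hfin : ∫⁻ x, g x ∂μ ≠ ⊤)
    (hc : ∀ x ∈ Metric.ball x₀ r, c ≤ g x) (hctop : c ≠ ⊤) (hA : Convex ℝ A) (hz₀ : z₀ ∈ A)
    (ha : 0 < a) (hb : 0 < b) (hab : a + b = 1) (hε : 0 < ε) :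
    (∫⁻ w in Metric.ball 0 (b * r / ε), laplaceDensity μ w ∂μ) *
        (ENNReal.ofReal (a ^ Module.finrank ℝ E) * (c ^ b * ∫⁻ x, supTranslate A g x ^ a ∂μ)) ≤
      ∫⁻ x, supTranslate A (mollify μ ε g) x ∂μ := by
  set mass := ∫⁻ w in Metric.ball 0 (b * r / ε), laplaceDensity μ w ∂μ
  have hmass : mass ≠ ⊤ :=
    ne_top_of_le_ne_top (by simp [lintegral_laplaceDensity])
      (setLIntegral_le_lintegral (Metric.ball 0 (b * r / ε)) (laplaceDensity μ))
  have hmeas := measurable_supTranslate_of_continuous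
    (isLogLipschitz_mollify hgm hg0 hfin hε).continuous A
  rw [← ofReal_mul_lintegral_comp_smul_add hmeas ha (b • (x₀ + z₀)), mul_left_comm,
    ← mul_assoc mass, ← lintegral_const_mul' _ _
      (ENNReal.mul_ne_top hmass (ENNReal.rpow_ne_top_of_nonneg hb.le hctop))]
  gcongr with x
  exact hg.supTranslate_rpow_mul_le_supTranslate_mollify hc hA hz₀ ha hb hab hε x

lemma IsLogConcave.mul_lintegral_supTranslate_rpow_le_liminf_mollify (hg : IsLogConcave g)
    (hgm : Measurable g) (hg0 : ∫⁻ x, g x ∂μ ≠ 0) (hfin : ∫⁻ x, g x ∂μ ≠ ⊤) (hr : 0 < r)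
    (hc : ∀ x ∈ Metric.ball x₀ r, c ≤ g x) (hctop : c ≠ ⊤) (hA : Convex ℝ A) (hz₀ : z₀ ∈ A)
    (ha : 0 < a) (hb : 0 < b) (hab : a + b = 1) :
    ENNReal.ofReal (a ^ Module.finrank ℝ E) * (c ^ b * ∫⁻ x, supTranslate A g x ^ a ∂μ) ≤
      liminf (fun ε : ℝ => ∫⁻ x, supTranslate A (mollify μ ε g) x ∂μ) (𝓝[>] 0) := by
  have hlim := ENNReal.Tendsto.mul_const (b := ENNReal.ofReal (a ^ Module.finrank ℝ E) *
      (c ^ b * ∫⁻ x, supTranslate A g x ^ a ∂μ))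
    (tendsto_setLIntegral_ball_laplaceDensity (μ := μ) (mul_pos hb hr)) (Or.inl one_ne_zero)
  rw [one_mul] at hlim
  rw [← hlim.liminf_eq]
  refine liminf_le_liminf ?_
  filter_upwards [self_mem_nhdsWithin] with ε hε
  exact hg.mul_lintegral_supTranslate_rpow_le_lintegral_mollify hgm hg0 hfin hc hctop hA hz₀ ha hb
    hab hε

lemma IsLogConcave.lintegral_supTranslate_le_liminf_mollify (hg : IsLogConcave g)
    (husc : UpperSemicontinuous g) (hg0 : ∫⁻ x, g x ∂μ ≠ 0) (hfin : ∫⁻ x, g x ∂μ ≠ ⊤)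
    (hA : IsCompact A) (hAconv : Convex ℝ A) (hA₀ : A.Nonempty) :
    ∫⁻ x, supTranslate A g x ∂μ ≤
      liminf (fun ε : ℝ => ∫⁻ x, supTranslate A (mollify μ ε g) x ∂μ) (𝓝[>] 0) := by
  obtain ⟨x₀, r, hr, c, hc0, hctop, hc⟩ := hg.exists_ball_forall_le hg0
  obtain ⟨z₀, hz₀⟩ := hA₀
  have hmeas := measurable_supTranslate_of_upperSemicontinuous husc hA ⟨z₀, hz₀⟩
  set H : ℝ → E → ℝ≥0∞ := fun a x =>
    ENNReal.ofReal (a ^ Module.finrank ℝ E) * (c ^ (1 - a) * supTranslate A g x ^ a)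
  have hH (x : E) : Tendsto (fun a => H a x) (𝓝[<] 1) (𝓝 (supTranslate A g x)) := by
    have hpow : Tendsto (fun a : ℝ => ENNReal.ofReal (a ^ Module.finrank ℝ E)) (𝓝 1) (𝓝 1) :=
      (ENNReal.continuous_ofReal.comp (continuous_pow _)).tendsto' 1 1 (by simp)
    have hcpow : Tendsto (fun a : ℝ => c ^ (1 - a)) (𝓝 1) (𝓝 1) :=
      ((continuous_ennreal_const_rpow hc0 hctop).comp (continuous_const.sub continuous_id)).tendsto'
        1 1 (by simp)
    simpa only [one_mul] using (ENNReal.Tendsto.mul hpow (Or.inl one_ne_zero)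
      (ENNReal.Tendsto.mul hcpow (Or.inl one_ne_zero)
        (tendsto_ennreal_const_rpow_one (supTranslate A g x)) (Or.inr ENNReal.one_ne_top))
      (Or.inr ENNReal.one_ne_top)).mono_left nhdsWithin_le_nhds
  calc ∫⁻ x, supTranslate A g x ∂μ = ∫⁻ x, liminf (fun a => H a x) (𝓝[<] 1) ∂μ := by
        simp only [(hH _).liminf_eq]
    _ ≤ liminf (fun a => ∫⁻ x, H a x ∂μ) (𝓝[<] 1) :=
        lintegral_liminf_le fun a => ((hmeas.pow_const _).const_mul _).const_mul _
    _ ≤ liminf (fun ε : ℝ => ∫⁻ x, supTranslate A (mollify μ ε g) x ∂μ) (𝓝[>] 0) := by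
        refine liminf_le_of_frequently_le' (Eventually.frequently ?_)
        filter_upwards [Ioo_mem_nhdsLT one_pos] with a ha
        rw [lintegral_const_mul _ ((hmeas.pow_const _).const_mul _),
          lintegral_const_mul _ (hmeas.pow_const _)]
        exact hg.mul_lintegral_supTranslate_rpow_le_liminf_mollify husc.measurable hg0 hfin hr hc
          hctop hAconv hz₀ ha.1 (sub_pos.2 ha.2) (add_sub_cancel a 1)

end Approximation

/-- The difference quotient `(F(t) - M) / t` at `0⁺` of a `[0, ∞]`-valued function with
value `M` at `0`, as an extended real. -/
def ediffQuot (F : ℝ → ℝ≥0∞) (M : ℝ≥0∞) (t : ℝ) : EReal :=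
  ((t⁻¹ : ℝ) : EReal) * ((F t : EReal) - (M : EReal))

section EDiffQuot

variable {F G : ℝ → ℝ≥0∞} {M : ℝ≥0∞} {t : ℝ}

lemma ediffQuot_eq_coe (hM : M ≠ ⊤) (hF : F t ≠ ⊤) :
    ediffQuot F M t = (((F t).toReal - M.toReal) / t : ℝ) := by
  rw [ediffQuot, ← EReal.coe_ennreal_toReal hF, ← EReal.coe_ennreal_toReal hM, ← EReal.coe_sub,
    ← EReal.coe_mul, inv_mul_eq_div]

lemma ediffQuot_mono (ht : 0 ≤ t) (hFG : F t ≤ G t) : ediffQuot F M t ≤ ediffQuot G M t :=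
  mul_le_mul_of_nonneg_left (EReal.sub_le_sub (EReal.coe_ennreal_le_coe_ennreal_iff.2 hFG) le_rfl)
    (EReal.coe_nonneg.2 (inv_nonneg.2 ht))

lemma tendsto_ediffQuot_ofReal_mul_exp (hM0 : M ≠ 0) (hM : M ≠ ⊤) (s : ℝ) :
    Tendsto (ediffQuot (fun t => ENNReal.ofReal (M.toReal * Real.exp (t * s / M.toReal))) M)
      (𝓝[>] 0) (𝓝 s) := by
  have hm : 0 < M.toReal := ENNReal.toReal_pos hM0 hM
  have hderiv : HasDerivAt (fun t => M.toReal * Real.exp (t * s / M.toReal)) s 0 :=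
    (((hasDerivAt_mul_const s).div_const M.toReal).exp.const_mul M.toReal).congr_deriv
      (by simp [mul_div_cancel₀ _ hm.ne'])
  refine (EReal.tendsto_coe.2 hderiv.tendsto_slope_zero_right).congr fun t => ?_
  rw [ediffQuot_eq_coe hM (by exact ENNReal.ofReal_ne_top), ENNReal.toReal_ofReal (by positivity)]
  simp [div_eq_inv_mul]

lemma tendsto_ediffQuot_zero (hM0 : M ≠ 0) (hM : M ≠ ⊤) :
    Tendsto (ediffQuot (fun _ => 0) M) (𝓝[>] 0) (𝓝 ⊥) := by
  have hm : 0 < M.toReal := ENNReal.toReal_pos hM0 hM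
  refine (EReal.tendsto_coe_atBot.comp
    (tendsto_inv_nhdsGT_zero.atTop_mul_const_of_neg (neg_lt_zero.2 hm))).congr fun t => ?_
  rw [ediffQuot_eq_coe hM ENNReal.zero_ne_top]
  simp [div_eq_inv_mul]

lemma exists_tendsto_ediffQuot_of_forall_le_liminf {ι : Type*} {l : Filter ι} [l.NeBot]
    {U : ι → ℝ → ℝ≥0∞} {D : ι → ℝ} (hM0 : M ≠ 0) (hM : M ≠ ⊤)
    (hUD : ∀ᶠ i in l, Tendsto (ediffQuot (U i) M) (𝓝[>] 0) (𝓝 (D i)))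
    (hUF : ∀ᶠ i in l, ∀ t > 0, U i t ≤ F t)
    (hF : ∀ t > 0, F t ≤
      liminf (fun i => ENNReal.ofReal (M.toReal * Real.exp (t * D i / M.toReal))) l) :
    ∃ d : EReal, d ≠ ⊥ ∧ Tendsto (fun i => (D i : EReal)) l (𝓝 d) ∧
      Tendsto (ediffQuot F M) (𝓝[>] 0) (𝓝 d) := by
  have hlower : ∀ᶠ i in l, (D i : EReal) ≤ liminf (ediffQuot F M) (𝓝[>] 0) := by
    filter_upwards [hUD, hUF] with i hUDi hUFi
    rw [← hUDi.liminf_eq]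
    refine liminf_le_liminf ?_
    filter_upwards [self_mem_nhdsWithin] with t ht using ediffQuot_mono (le_of_lt ht) (hUFi t ht)
  have hupper : limsup (ediffQuot F M) (𝓝[>] 0) ≤ liminf (fun i => (D i : EReal)) l := by
    refine EReal.le_of_forall_lt_iff_le.1 fun s hs => ?_
    rw [← (tendsto_ediffQuot_ofReal_mul_exp hM0 hM s).limsup_eq]
    refine limsup_le_limsup ?_
    filter_upwards [self_mem_nhdsWithin] with t ht
    refine ediffQuot_mono (le_of_lt ht) ((hF t ht).trans (liminf_le_of_frequently_le' ?_))
    refine (frequently_lt_of_liminf_lt (by isBoundedDefault) hs).mono fun i hi => ?_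
    have hDs : D i ≤ s := (EReal.coe_lt_coe_iff.1 hi).le
    have ht' : 0 < t := ht
    gcongr
  have hlimsup : limsup (fun i => (D i : EReal)) l ≤ liminf (ediffQuot F M) (𝓝[>] 0) :=
    limsup_le_of_le (by isBoundedDefault) hlower
  have hquot := liminf_le_limsup (f := 𝓝[>] (0 : ℝ)) (u := ediffQuot F M)
  have hD := liminf_le_limsup (f := l) (u := fun i => (D i : EReal))
  refine ⟨liminf (ediffQuot F M) (𝓝[>] 0), ?_, ?_, ?_⟩
  · obtain ⟨i, hi⟩ := hlower.exists
    exact ((EReal.bot_lt_coe _).trans_le hi).ne'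
  · exact tendsto_of_le_liminf_of_limsup_le (hquot.trans hupper) hlimsup
  · exact tendsto_of_le_liminf_of_limsup_le le_rfl (hupper.trans (hD.trans hlimsup))

end EDiffQuot

lemma tendsto_ediffQuot_lintegral_supTranslate_empty {E : Type*} [AddCommGroup E] [Module ℝ E]
    [MeasurableSpace E] {μ : Measure E} {g : E → ℝ≥0∞} (hg0 : ∫⁻ x, g x ∂μ ≠ 0)
    (hfin : ∫⁻ x, g x ∂μ ≠ ⊤) :
    Tendsto (ediffQuot (fun t => ∫⁻ x, supTranslate (t • (∅ : Set E)) g x ∂μ) (∫⁻ x, g x ∂μ))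
      (𝓝[>] 0) (𝓝 ⊥) := by
  simpa [supTranslate_empty] using tendsto_ediffQuot_zero hg0 hfin

lemma isCompact_closedConvexHull {E : Type*} [NormedAddCommGroup E] [NormedSpace ℝ E]
    [FiniteDimensional ℝ E] {L : Set E} (hL : Bornology.IsBounded L) :
    IsCompact (closedConvexHull ℝ L) := by
  refine Metric.isCompact_of_isClosed_isBounded isClosed_closedConvexHull ?_
  rw [closedConvexHull_eq_closure_convexHull]
  exact (isBounded_convexHull.2 hL).closure

section FirstVariation

variable {E : Type*} [NormedAddCommGroup E] [NormedSpace ℝ E] [FiniteDimensional ℝ E]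
  [MeasurableSpace E] [BorelSpace E] {μ : Measure E} [μ.IsAddHaarMeasure]
  {g : E → ℝ≥0∞} {L B : Set E}

lemma tendsto_ediffQuot_lintegral_supTranslate_mollify (hg : Measurable g)
    (hg0 : ∫⁻ x, g x ∂μ ≠ 0) (hfin : ∫⁻ x, g x ∂μ ≠ ⊤) (hL : Bornology.IsBounded L)
    (hL₀ : L.Nonempty) {ε : ℝ} (hε : 0 < ε) :
    Tendsto (ediffQuot (fun t => ∫⁻ x, supTranslate (t • L) (mollify μ ε g) x ∂μ)
      (∫⁻ x, g x ∂μ)) (𝓝[>] 0) (𝓝 (anisotropicVariation μ L (mollify μ ε g) : EReal)) := by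
  have hlip := isLogLipschitz_mollify hg hg0 hfin hε
  rw [← lintegral_mollify (ε := ε) hg] at hfin ⊢
  refine (EReal.tendsto_coe.2 (hlip.tendsto_slope_lintegral_supTranslate hfin hL hL₀)).congr
    fun t => ?_
  rw [ediffQuot_eq_coe hfin (hlip.lintegral_supTranslate_ne_top hfin (hL.smul₀ t))]

namespace IsLogConcave

lemma lintegral_supTranslate_smul_le_liminf_exp (hg : IsLogConcave g)
    (husc : UpperSemicontinuous g) (hg0 : ∫⁻ x, g x ∂μ ≠ 0) (hfin : ∫⁻ x, g x ∂μ ≠ ⊤)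
    (hL : IsCompact L) (hL₀ : L.Nonempty) {t : ℝ} (ht : 0 < t) :
    ∫⁻ x, supTranslate (t • L) g x ∂μ ≤
      liminf (fun ε => ENNReal.ofReal ((∫⁻ x, g x ∂μ).toReal *
        Real.exp (t * anisotropicVariation μ L (mollify μ ε g) / (∫⁻ x, g x ∂μ).toReal)))
        (𝓝[>] 0) := by
  have hH : IsCompact (closedConvexHull ℝ L) := isCompact_closedConvexHull hL.isBounded
  have hH₀ : (closedConvexHull ℝ L).Nonempty := hL₀.mono subset_closedConvexHull
  calc ∫⁻ x, supTranslate (t • L) g x ∂μ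
      ≤ ∫⁻ x, supTranslate (t • closedConvexHull ℝ L) g x ∂μ :=
        lintegral_mono (supTranslate_mono (smul_set_mono subset_closedConvexHull))
    _ ≤ liminf (fun ε => ∫⁻ x, supTranslate (t • closedConvexHull ℝ L) (mollify μ ε g) x ∂μ)
          (𝓝[>] 0) :=
        hg.lintegral_supTranslate_le_liminf_mollify husc hg0 hfin (hH.smul t)
          (convex_closedConvexHull.smul t) hH₀.smul_set
    _ ≤ _ := by
        refine liminf_le_liminf ?_
        filter_upwards [self_mem_nhdsWithin] with ε hε
        have hlip := isLogLipschitz_mollify husc.measurable hg0 hfin hε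
        have hmass := lintegral_mollify (μ := μ) (ε := ε) husc.measurable
        have hexp := (hg.mollify husc.measurable).lintegral_supTranslate_smul_le_exp hlip
          (hmass.trans_ne hfin) hH.isBounded hH₀ ht
        rwa [hmass, anisotropicVariation_closedConvexHull μ hL.isBounded hL₀] at hexp

theorem exists_tendsto_ediffQuot_lintegral_supTranslate (hg : IsLogConcave g)
    (husc : UpperSemicontinuous g) (hg0 : ∫⁻ x, g x ∂μ ≠ 0) (hfin : ∫⁻ x, g x ∂μ ≠ ⊤)
    (hL : IsCompact L) (hL₀ : L.Nonempty) :
    ∃ d : EReal, d ≠ ⊥ ∧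
      Tendsto (fun ε => (anisotropicVariation μ L (mollify μ ε g) : EReal)) (𝓝[>] 0) (𝓝 d) ∧
      Tendsto (ediffQuot (fun t => ∫⁻ x, supTranslate (t • L) g x ∂μ) (∫⁻ x, g x ∂μ))
        (𝓝[>] 0) (𝓝 d) := by
  refine exists_tendsto_ediffQuot_of_forall_le_liminf
    (U := fun ε t => ∫⁻ x, supTranslate (t • L) (mollify μ ε g) x ∂μ) hg0 hfin ?_ ?_ fun t ht =>
    hg.lintegral_supTranslate_smul_le_liminf_exp husc hg0 hfin hL hL₀ ht
  · filter_upwards [self_mem_nhdsWithin] with ε hε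
    exact tendsto_ediffQuot_lintegral_supTranslate_mollify husc.measurable hg0 hfin hL.isBounded
      hL₀ hε
  · exact Eventually.of_forall fun ε t _ => lintegral_supTranslate_mollify_le
      (measurable_supTranslate_of_upperSemicontinuous husc (hL.smul t) hL₀.smul_set)

lemma exists_tendsto_ediffQuot_lintegral_supTranslate_add_of_nonempty (hg : IsLogConcave g)
    (husc : UpperSemicontinuous g) (hg0 : ∫⁻ x, g x ∂μ ≠ 0) (hfin : ∫⁻ x, g x ∂μ ≠ ⊤)
    (hL : IsCompact L) (hL₀ : L.Nonempty) (hB : IsCompact B) (hB₀ : B.Nonempty) :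
    ∃ dL dB : EReal,
      Tendsto (ediffQuot (fun t => ∫⁻ x, supTranslate (t • L) g x ∂μ) (∫⁻ x, g x ∂μ))
        (𝓝[>] 0) (𝓝 dL) ∧
      Tendsto (ediffQuot (fun t => ∫⁻ x, supTranslate (t • B) g x ∂μ) (∫⁻ x, g x ∂μ))
        (𝓝[>] 0) (𝓝 dB) ∧
      Tendsto (ediffQuot (fun t => ∫⁻ x, supTranslate (t • (L + B)) g x ∂μ) (∫⁻ x, g x ∂μ))
        (𝓝[>] 0) (𝓝 (dL + dB)) := by
  obtain ⟨dL, hdL, hvarL, hquotL⟩ :=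
    hg.exists_tendsto_ediffQuot_lintegral_supTranslate husc hg0 hfin hL hL₀
  obtain ⟨dB, hdB, hvarB, hquotB⟩ :=
    hg.exists_tendsto_ediffQuot_lintegral_supTranslate husc hg0 hfin hB hB₀
  obtain ⟨d, -, hvar, hquot⟩ :=
    hg.exists_tendsto_ediffQuot_lintegral_supTranslate husc hg0 hfin (hL.add hB) (hL₀.add hB₀)
  have hadd : Tendsto (fun ε => (anisotropicVariation μ (L + B) (mollify μ ε g) : EReal))
      (𝓝[>] 0) (𝓝 (dL + dB)) := by
    refine ((EReal.continuousAt_add (.inr hdB) (.inl hdL)).tendsto.comp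
      (hvarL.prodMk_nhds hvarB)).congr' ?_
    filter_upwards [self_mem_nhdsWithin] with ε hε
    have hlip := isLogLipschitz_mollify husc.measurable hg0 hfin hε
    have hfin' := (lintegral_mollify (ε := ε) husc.measurable).trans_ne hfin
    simp [hlip.anisotropicVariation_add hfin' hL.isBounded hL₀ hB.isBounded hB₀]
  exact ⟨dL, dB, hquotL, hquotB, tendsto_nhds_unique hvar hadd ▸ hquot⟩

lemma exists_tendsto_ediffQuot_lintegral_supTranslate_of_isCompact (hg : IsLogConcave g)
    (husc : UpperSemicontinuous g) (hg0 : ∫⁻ x, g x ∂μ ≠ 0) (hfin : ∫⁻ x, g x ∂μ ≠ ⊤)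
    (hL : IsCompact L) :
    ∃ d : EReal, Tendsto (ediffQuot (fun t => ∫⁻ x, supTranslate (t • L) g x ∂μ)
      (∫⁻ x, g x ∂μ)) (𝓝[>] 0) (𝓝 d) := by
  rcases L.eq_empty_or_nonempty with rfl | hL₀
  · exact ⟨⊥, tendsto_ediffQuot_lintegral_supTranslate_empty hg0 hfin⟩
  · obtain ⟨d, -, -, hd⟩ :=
      hg.exists_tendsto_ediffQuot_lintegral_supTranslate husc hg0 hfin hL hL₀
    exact ⟨d, hd⟩

theorem exists_tendsto_ediffQuot_lintegral_supTranslate_add (hg : IsLogConcave g)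
    (husc : UpperSemicontinuous g) (hg0 : ∫⁻ x, g x ∂μ ≠ 0) (hfin : ∫⁻ x, g x ∂μ ≠ ⊤)
    (hL : IsCompact L) (hB : IsCompact B) :
    ∃ dL dB : EReal,
      Tendsto (ediffQuot (fun t => ∫⁻ x, supTranslate (t • L) g x ∂μ) (∫⁻ x, g x ∂μ))
        (𝓝[>] 0) (𝓝 dL) ∧
      Tendsto (ediffQuot (fun t => ∫⁻ x, supTranslate (t • B) g x ∂μ) (∫⁻ x, g x ∂μ))
        (𝓝[>] 0) (𝓝 dB) ∧
      Tendsto (ediffQuot (fun t => ∫⁻ x, supTranslate (t • (L + B)) g x ∂μ) (∫⁻ x, g x ∂μ))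
        (𝓝[>] 0) (𝓝 (dL + dB)) := by
  have hempty := tendsto_ediffQuot_lintegral_supTranslate_empty hg0 hfin
  rcases L.eq_empty_or_nonempty with rfl | hL₀
  · obtain ⟨dB, hdB⟩ :=
      hg.exists_tendsto_ediffQuot_lintegral_supTranslate_of_isCompact husc hg0 hfin hB
    exact ⟨⊥, dB, hempty, hdB, by rwa [empty_add, EReal.bot_add]⟩
  rcases B.eq_empty_or_nonempty with rfl | hB₀
  · obtain ⟨dL, hdL⟩ :=
      hg.exists_tendsto_ediffQuot_lintegral_supTranslate_of_isCompact husc hg0 hfin hL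
    exact ⟨dL, ⊥, hdL, hempty, by rwa [add_empty, EReal.add_bot]⟩
  exact hg.exists_tendsto_ediffQuot_lintegral_supTranslate_add_of_nonempty husc hg0 hfin hL hL₀
    hB hB₀

end IsLogConcave
end FirstVariation

section Euclidean

variable {n : ℕ} {f : Euc n → ℝ}

lemma LogConcaveFn.isLogConcave_ofReal (hflc : LogConcaveFn f) (hf0 : ∀ x, 0 ≤ f x) :
    IsLogConcave fun x => ENNReal.ofReal (f x) := by
  intro a b ha hb hab x y
  obtain rfl : a = 1 - b := eq_sub_of_add_eq hab
  rw [ENNReal.ofReal_rpow_of_nonneg (hf0 x) ha.le, ENNReal.ofReal_rpow_of_nonneg (hf0 y) hb.le,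
    ← ENNReal.ofReal_mul (Real.rpow_nonneg (hf0 x) _)]
  exact ENNReal.ofReal_le_ofReal (hflc x y b hb.le (sub_pos.1 ha).le)

lemma dil_indicator_one {t : ℝ} (ht : 0 < t) (L : Set (Euc n)) :
    dil t (L.indicator fun _ => (1 : ℝ)) = (t • L).indicator fun _ => 1 := by
  ext x
  by_cases hx : t⁻¹ • x ∈ L
  · simp [dil, hx, mem_smul_set_iff_inv_smul_mem₀ ht.ne']
  · simp [dil, hx, mem_smul_set_iff_inv_smul_mem₀ ht.ne', ht.ne']

lemma supConv_indicator_one (f : Euc n → ℝ) (A : Set (Euc n)) :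
    supConv f (A.indicator fun _ => (1 : ℝ)) =
      supTranslate A fun x => ENNReal.ofReal (f x) := by
  ext x
  calc supConv f (A.indicator fun _ => (1 : ℝ)) x
      = ⨆ z, ENNReal.ofReal (f (x - z) * A.indicator (fun _ => (1 : ℝ)) z) := by
        refine ((Equiv.subLeft x).iSup_congr fun z => ?_).symm
        simp
    _ = supTranslate A (fun x => ENNReal.ofReal (f x)) x := by
        refine iSup_congr fun z => ?_
        by_cases hz : z ∈ A <;> simp [hz]

lemma deltaQuot_indicator_one_eq_ediffQuot (f : Euc n → ℝ) (L : Set (Euc n)) {t : ℝ} (ht : 0 < t) :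
    deltaQuot f (L.indicator fun _ => (1 : ℝ)) t =
      ediffQuot (fun s => ∫⁻ x, supTranslate (s • L) (fun y => ENNReal.ofReal (f y)) x)
        (totalMass f) t := by
  rw [deltaQuot, ediffQuot, dil_indicator_one ht, supConv_indicator_one]

lemma tendsto_deltaQuot_indicator_one_iff {L : Set (Euc n)} {d : EReal} :
    Tendsto (deltaQuot f (L.indicator fun _ => (1 : ℝ))) (𝓝[>] 0) (𝓝 d) ↔
      Tendsto (ediffQuot (fun s => ∫⁻ x, supTranslate (s • L) (fun y => ENNReal.ofReal (f y)) x)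
        (totalMass f)) (𝓝[>] 0) (𝓝 d) := by
  refine tendsto_congr' ?_
  filter_upwards [self_mem_nhdsWithin] with t ht using deltaQuot_indicator_one_eq_ediffQuot f L ht

end Euclidean

theorem first_variation_minkowski_additive_general (n : ℕ) (f : Euc n → ℝ)
    (hf0 : ∀ x, 0 ≤ f x) (hfusc : UpperSemicontinuous f) (hflc : LogConcaveFn f)
    (hfpos : 0 < totalMass f) (hffin : totalMass f < ⊤)
    (L B : Set (Euc n)) (hLcomp : IsCompact L) (hBcomp : IsCompact B) :
    ∃ dL dB : EReal,
      Tendsto (deltaQuot f (L.indicator fun _ => (1 : ℝ))) (𝓝[>] (0 : ℝ)) (𝓝 dL) ∧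
      Tendsto (deltaQuot f (B.indicator fun _ => (1 : ℝ))) (𝓝[>] (0 : ℝ)) (𝓝 dB) ∧
      Tendsto (deltaQuot f ((L + B).indicator fun _ => (1 : ℝ))) (𝓝[>] (0 : ℝ))
        (𝓝 (dL + dB)) := by
  have husc : UpperSemicontinuous fun x => ENNReal.ofReal (f x) :=
    ENNReal.continuous_ofReal.comp_upperSemicontinuous hfusc
      fun _ _ hab => ENNReal.ofReal_le_ofReal hab
  simp only [tendsto_deltaQuot_indicator_one_iff]
  exact (hflc.isLogConcave_ofReal hf0).exists_tendsto_ediffQuot_lintegral_supTranslate_add husc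
    hfpos.ne' hffin.ne hLcomp hBcomp

/-- `δ(f, 1_{L+B}) = δ(f, 1_L) + δ(f, 1_B)` for compact convex `L, B`. -/
theorem first_variation_minkowski_additive (n : ℕ) (f : Euc n → ℝ)
    (hf0 : ∀ x, 0 ≤ f x) (hfusc : UpperSemicontinuous f) (hflc : LogConcaveFn f)
    (hfpos : 0 < totalMass f) (hffin : totalMass f < ⊤)
    (L B : Set (Euc n)) (hLcomp : IsCompact L) (hLconv : Convex ℝ L)
    (hBcomp : IsCompact B) (hBconv : Convex ℝ B) :
    ∀ dL dB : EReal,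
      Tendsto (deltaQuot f (L.indicator fun _ => (1 : ℝ))) (𝓝[>] (0 : ℝ)) (𝓝 dL) →
      Tendsto (deltaQuot f (B.indicator fun _ => (1 : ℝ))) (𝓝[>] (0 : ℝ)) (𝓝 dB) →
      Tendsto (deltaQuot f ((L + B).indicator fun _ => (1 : ℝ))) (𝓝[>] (0 : ℝ))
        (𝓝 (dL + dB)) := by
  intro dL dB hdL hdB
  obtain ⟨dL', dB', hdL', hdB', hsum⟩ := first_variation_minkowski_additive_general n f hf0 hfusc
    hflc hfpos hffin L B hLcomp hBcomp
  rwa [tendsto_nhds_unique hdL hdL', tendsto_nhds_unique hdB hdB']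

end
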